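/- Let n and k be positive integers with k ≡ 2 (mod 3), k ≥ 3 and n ≥ k+3, and let G be a potted graph of order n whose cycle has length k. Set x₁ = k·3^{(n−k−1)/3−1} + (k+1)/3, x₂ = (k+1)·3^{(n−k−1)/3−1} + 1, x₃ = k·3^{(n−k)/3−1} + (1/3)(k+1)·((n−k)/3 + 1) + 1 and x₄ = (k+1)·3^{(n−k)/3−1} + (n+k−1)/3. Then: if n ≡ 0 (mod 3), m(G) ≤ max{x₁, x₂}; if n ≡ 1 (mod 3), m(G) ≤ (k+1)·3^{(n−k−2)/3−1}; if n ≡ 2 (mod 3), m(G) ≤ max{x₃, x₄}. -/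

import Mathlib

open scoped Classical

variable {V : Type*}

/-- The number of neighbors of `v` that lie inside the finite set `s`,
i.e. the degree of `v` in the subgraph induced by `s` (when `v ∈ s`). -/
noncomputable def nbrCount (G : SimpleGraph V) (s : Finset V) (v : V) : ℕ :=
  {w ∈ (s : Set V) | G.Adj v w}.ncard

/-- `s` is a dissociation set of `G`: the subgraph induced by `s` has maximum degree at most 1. -/
def IsDissoc (G : SimpleGraph V) (s : Finset V) : Prop :=
  ∀ v ∈ s, nbrCount G s v ≤ 1

/-- The dissociation number of the subgraph of `G` induced by `A`. -/
noncomputable def dissNumOn (G : SimpleGraph V) (A : Set V) : ℕ :=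
  sSup {n | ∃ s : Finset V, ↑s ⊆ A ∧ IsDissoc G s ∧ s.card = n}

/-- `s` is a maximum dissociation set of the subgraph of `G` induced by `A`. -/
def IsMaxDissocOn (G : SimpleGraph V) (A : Set V) (s : Finset V) : Prop :=
  ↑s ⊆ A ∧ IsDissoc G s ∧ s.card = dissNumOn G A

/-- The number of maximum dissociation sets of the subgraph of `G` induced by `A`. -/
noncomputable def numMaxDissocOn (G : SimpleGraph V) (A : Set V) : ℕ :=
  Nat.card {s : Finset V // IsMaxDissocOn G A s}

/-- The dissociation number of `G`. -/
noncomputable def dissNum (G : SimpleGraph V) : ℕ :=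
  dissNumOn G Set.univ

/-- `s` is a maximum dissociation set of `G`. -/
def IsMaxDissoc (G : SimpleGraph V) (s : Finset V) : Prop :=
  IsMaxDissocOn G Set.univ s

/-- The number `m(G)` of maximum dissociation sets of `G`. -/
noncomputable def numMaxDissoc (G : SimpleGraph V) : ℕ :=
  numMaxDissocOn G Set.univ

/-- `m(G[A], u⁻)`: maximum dissociation sets of `G[A]` not containing `u`. -/
noncomputable def numMaxDissocOnAway (G : SimpleGraph V) (A : Set V) (u : V) : ℕ :=
  Nat.card {s : Finset V // IsMaxDissocOn G A s ∧ u ∉ s}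

/-- `m(G[A], u⁰)`: maximum dissociation sets of `G[A]` containing `u` with induced degree 0. -/
noncomputable def numMaxDissocOnDeg0 (G : SimpleGraph V) (A : Set V) (u : V) : ℕ :=
  Nat.card {s : Finset V // IsMaxDissocOn G A s ∧ u ∈ s ∧ nbrCount G s u = 0}

/-- `m(G[A], u¹)`: maximum dissociation sets of `G[A]` containing `u` with induced degree 1. -/
noncomputable def numMaxDissocOnDeg1 (G : SimpleGraph V) (A : Set V) (u : V) : ℕ :=
  Nat.card {s : Finset V // IsMaxDissocOn G A s ∧ u ∈ s ∧ nbrCount G s u = 1}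

/-- `m(G, u⁻)`. -/
noncomputable def numMaxDissocAway (G : SimpleGraph V) (u : V) : ℕ :=
  numMaxDissocOnAway G Set.univ u

/-- `m(G, u⁰)`. -/
noncomputable def numMaxDissocDeg0 (G : SimpleGraph V) (u : V) : ℕ :=
  numMaxDissocOnDeg0 G Set.univ u

/-- `m(G, u¹)`. -/
noncomputable def numMaxDissocDeg1 (G : SimpleGraph V) (u : V) : ℕ :=
  numMaxDissocOnDeg1 G Set.univ u

/-- `m̄`: relative count, `numMaxDissocOn G B` if `dissNumOn G B = dissNumOn G A`, else 0. -/
noncomputable def mbar (G : SimpleGraph V) (A B : Set V) : ℕ :=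
  if dissNumOn G B = dissNumOn G A then numMaxDissocOn G B else 0

/-- `G` is a potted graph whose (unique) cycle has length `k`: `G` is connected and unicyclic
(equivalently, connected with as many edges as vertices), and its cycle has length `k` and
contains a unique vertex of degree larger than 2. -/
def IsPotted (G : SimpleGraph V) (k : ℕ) : Prop :=
  G.Connected ∧ G.edgeSet.ncard = Nat.card V ∧
    ∃ (v : V) (c : G.Walk v v), c.IsCycle ∧ c.length = k ∧
      ∃! u, u ∈ c.support ∧ 2 < (G.neighborSet u).ncard

/-! ### Deletion sets -/

def Ds (G : SimpleGraph V) (I : Finset V) : Prop :=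
  ∀ v ∈ I, ∀ a ∈ I, ∀ b ∈ I, G.Adj v a → G.Adj v b → a = b

noncomputable def MD (G : SimpleGraph V) (A : Finset V) : Finset (Finset V) :=
  A.powerset.filter (fun D => Ds G (A \ D) ∧ ∀ E ⊆ A, Ds G (A \ E) → D.card ≤ E.card)

noncomputable def cnt (G : SimpleGraph V) (A : Finset V) (Φ : Finset V → Prop) : ℕ :=
  (@Finset.filter _ Φ (fun _ => Classical.propDecidable _) (MD G A)).card

noncomputable def opt (G : SimpleGraph V) (S : Finset V) : Finset V :=
  S.filter (fun s => Ds G (S.erase s))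

def Iso (G : SimpleGraph V) (A D : Finset V) (v : V) : Prop :=
  v ∈ A ∧ v ∉ D ∧ ∀ w ∈ A, w ∉ D → ¬ G.Adj v w

structure Att (G : SimpleGraph V) (A S : Finset V) (x y : V) : Prop where
  disj : Disjoint A S
  hx : x ∈ S
  hy : y ∈ A
  adj : G.Adj x y
  edge : ∀ a ∈ A, ∀ b ∈ S, G.Adj a b → a = y ∧ b = x
  ds : Ds G (S.erase x)
  nds : ¬ Ds G S

theorem mem_MD {G : SimpleGraph V} {A D : Finset V} :
    D ∈ MD G A ↔ D ⊆ A ∧ Ds G (A \ D) ∧ ∀ E ⊆ A, Ds G (A \ E) → D.card ≤ E.card := by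
  simp [MD]

theorem cnt_true (G : SimpleGraph V) (A : Finset V) : cnt G A (fun _ => True) = (MD G A).card := by
  unfold cnt
  congr 1
  ext D
  simp

theorem cnt_mono {G : SimpleGraph V} {A : Finset V} {Φ Ψ : Finset V → Prop}
    (h : ∀ D ∈ MD G A, Φ D → Ψ D) : cnt G A Φ ≤ cnt G A Ψ := by
  unfold cnt
  apply Finset.card_le_card
  intro D hD
  simp only [Finset.mem_filter] at hD ⊢
  exact ⟨hD.1, h D hD.1 hD.2⟩

theorem cnt_le (G : SimpleGraph V) (A : Finset V) (Φ : Finset V → Prop) :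
    cnt G A Φ ≤ (MD G A).card := Finset.card_filter_le _ _

theorem cnt_zero {G : SimpleGraph V} {A : Finset V} {Φ : Finset V → Prop}
    (h : ∀ D ∈ MD G A, ¬ Φ D) : cnt G A Φ = 0 := by
  unfold cnt
  rw [Finset.card_eq_zero, Finset.filter_eq_empty_iff]
  exact fun D hD => h D hD

theorem cnt_or {G : SimpleGraph V} {A : Finset V} {Φ Ψ Ξ : Finset V → Prop}
    (h : ∀ D ∈ MD G A, Φ D → Ψ D ∨ Ξ D) : cnt G A Φ ≤ cnt G A Ψ + cnt G A Ξ := by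
  unfold cnt
  refine le_trans (Finset.card_le_card ?_) (Finset.card_union_le _ _)
  intro D hD
  simp only [Finset.mem_filter, Finset.mem_union] at hD ⊢
  exact (h D hD.1 hD.2).imp (fun h' => ⟨hD.1, h'⟩) (fun h' => ⟨hD.1, h'⟩)

theorem Ds.mono {G : SimpleGraph V} {I J : Finset V} (h : Ds G J) (hs : I ⊆ J) : Ds G I :=
  fun v hv a ha b hb => h v (hs hv) a (hs ha) b (hs hb)

theorem MD_nonempty (G : SimpleGraph V) (A : Finset V) : ∃ D, D ∈ MD G A := by
  obtain ⟨D, hD, hmin⟩ := Finset.exists_min_image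
    (A.powerset.filter (fun D => Ds G (A \ D))) Finset.card
    ⟨A, by simp only [Finset.mem_filter, Finset.mem_powerset, subset_refl, true_and, Finset.sdiff_self]; intro v hv; simp at hv⟩
  simp only [Finset.mem_filter, Finset.mem_powerset] at hD hmin
  exact ⟨D, mem_MD.2 ⟨hD.1, hD.2, fun E hE hE' => hmin E ⟨hE, hE'⟩⟩⟩

theorem att_step {G : SimpleGraph V} {A S : Finset V} {x y : V} (h : Att G A S x y)
    {D : Finset V} (hD : D ∈ MD G (A ∪ S)) :
    D ∩ A ∈ MD G A ∧ ∃ s ∈ opt G S, D ∩ S = {s} := by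
  obtain ⟨hsub, hds, hmin⟩ := mem_MD.1 hD
  have hdisj := Finset.disjoint_left.1 h.disj
  have hcard : D.card = (D ∩ A).card + (D ∩ S).card := by
    rw [← Finset.card_union_of_disjoint]
    · congr 1
      ext z
      have := @hsub z
      simp only [Finset.mem_union, Finset.mem_inter] at this ⊢
      tauto
    · exact h.disj.mono Finset.inter_subset_right Finset.inter_subset_right
  have hDA : Ds G (A \ (D ∩ A)) := hds.mono (by
    intro z hz
    simp only [Finset.mem_sdiff, Finset.mem_inter, Finset.mem_union] at hz ⊢
    tauto)
  have hDS : Ds G (S \ (D ∩ S)) := hds.mono (by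
    intro z hz
    simp only [Finset.mem_sdiff, Finset.mem_inter, Finset.mem_union] at hz ⊢
    tauto)
  have hne : (D ∩ S).Nonempty := by
    rw [Finset.nonempty_iff_ne_empty]
    intro he
    rw [he, Finset.sdiff_empty] at hDS
    exact h.nds hDS
  have hpos := Finset.card_pos.2 hne
  have key : ∀ E ⊆ A, Ds G (A \ E) → D.card ≤ E.card + 1 := by
    intro E hE hEd
    have h1 : insert x E ⊆ A ∪ S := by
      intro z hz
      rcases Finset.mem_insert.1 hz with rfl | hz
      · exact Finset.mem_union_right _ h.hx
      · exact Finset.mem_union_left _ (hE hz)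
    refine (hmin _ h1 ?_).trans (Finset.card_insert_le _ _)
    intro v hv a ha b hb hva hvb
    simp only [Finset.mem_sdiff, Finset.mem_union, Finset.mem_insert, not_or] at hv ha hb
    have cross : ∀ p q, p ∈ A → q ∈ S → q ≠ x → ¬ G.Adj p q := fun p q hp hq hqx hpq =>
      hqx (h.edge p hp q hq hpq).2
    rcases hv.1 with hvA | hvS
    · have haA : a ∈ A := ha.1.resolve_right (fun hs => cross v a hvA hs ha.2.1 hva)
      have hbA : b ∈ A := hb.1.resolve_right (fun hs => cross v b hvA hs hb.2.1 hvb)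
      exact hEd v (by simp [hvA, hv.2.2]) a (by simp [haA, ha.2.2]) b (by simp [hbA, hb.2.2]) hva hvb
    · have haA : a ∈ S := ha.1.resolve_left (fun hs => cross a v hs hvS hv.2.1 hva.symm)
      have hbA : b ∈ S := hb.1.resolve_left (fun hs => cross b v hs hvS hv.2.1 hvb.symm)
      exact h.ds v (by simp [hvS, hv.2.1]) a (by simp [haA, ha.2.1]) b (by simp [hbA, hb.2.1]) hva hvb
  obtain ⟨E0, hE0⟩ := MD_nonempty G A
  obtain ⟨h01, h02, h03⟩ := mem_MD.1 hE0
  have k1 := key E0 h01 h02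
  have k2 := h03 (D ∩ A) Finset.inter_subset_right hDA
  have hone : (D ∩ S).card = 1 := by omega
  refine ⟨mem_MD.2 ⟨Finset.inter_subset_right, hDA, fun E hE hEd => ?_⟩, ?_⟩
  · have := key E hE hEd
    omega
  · obtain ⟨s, hs⟩ := Finset.card_eq_one.1 hone
    refine ⟨s, ?_, hs⟩
    have hsS : s ∈ D ∩ S := by rw [hs]; simp
    simp only [opt, Finset.mem_filter]
    refine ⟨(Finset.mem_inter.1 hsS).2, ?_⟩
    rw [hs] at hDS
    exact hDS.mono (by intro z hz; simp only [Finset.mem_erase] at hz; simp [hz.1, hz.2])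

theorem MD_Ds {G : SimpleGraph V} {A D : Finset V} (hD : D ∈ MD G A) : Ds G (A \ D) :=
  (mem_MD.1 hD).2.1

theorem Iso_of_adj {G : SimpleGraph V} {A S D : Finset V} {x y : V} (hD : Ds G (A \ D))
    (hS : S ⊆ A) (hx : x ∈ S) (hy : y ∈ A) (hyS : y ∉ S) (hxD : x ∉ D) (hyD : y ∉ D)
    (hxy : G.Adj x y) : Iso G S (D ∩ S) x := by
  refine ⟨hx, fun h => hxD (Finset.mem_inter.1 h).1, fun w hw hwD hadj => ?_⟩
  have hwD' : w ∉ D := fun h => hwD (Finset.mem_inter.2 ⟨h, hw⟩)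
  have := hD x (by simp [hS hx, hxD]) w (by simp [hS hw, hwD']) y (by simp [hy, hyD]) hadj hxy
  exact hyS (this ▸ hw)

theorem Iso_restrict {G : SimpleGraph V} {A S D : Finset V} {x : V} (h : Iso G A D x)
    (hS : S ⊆ A) (hx : x ∈ S) : Iso G S (D ∩ S) x :=
  ⟨hx, fun h' => h.2.1 (Finset.mem_inter.1 h').1, fun w hw hwD =>
    h.2.2 w (hS hw) (fun h' => hwD (Finset.mem_inter.2 ⟨h', hw⟩))⟩

/-- Shapes of clusters. -/
def Sh3 (G : SimpleGraph V) (S : Finset V) : Prop :=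
  S.card = 3 ∧ ∃ c ∈ S, ∀ a ∈ S, a ≠ c → G.Adj c a

def Sh4 (G : SimpleGraph V) (S : Finset V) : Prop :=
  S.card = 4 ∧ (opt G S).card ≤ 2 ∧
    ∀ w ∈ S, (w ∈ opt G S → ∀ s ∈ opt G S, ¬ Iso G S {s} w) ∧
      ((opt G S).filter (fun s => Iso G S {s} w)).card ≤ 1

def Sh5 (G : SimpleGraph V) (S : Finset V) : Prop :=
  5 ≤ S.card ∧ (opt G S).card ≤ 1

theorem Sh3_center {G : SimpleGraph V} {S : Finset V} (h : Sh3 G S) :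
    ∃ c ∈ S, ∀ s ∈ S, ∀ w ∈ S, Iso G S {s} w → s = c ∧ w ≠ c := by
  obtain ⟨h3, c, hc, hadj⟩ := h
  refine ⟨c, hc, fun s hs w hw hI => ?_⟩
  obtain ⟨_, h1, h2⟩ := hI
  simp only [Finset.mem_singleton] at h1 h2
  have hwc : w ≠ c := by
    rintro rfl
    have : ∃ a ∈ S, a ≠ s ∧ a ≠ w := by
      by_contra hcon
      push Not at hcon
      have hsub : S ⊆ {s, w} := by
        intro a ha
        by_cases h : a = s
        · simp [h]
        · simp [hcon a ha h]
      have := (Finset.card_le_card hsub).trans Finset.card_le_two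
      omega
    obtain ⟨a, ha, has, haw⟩ := this
    exact h2 a ha has (hadj a ha haw)
  refine ⟨?_, hwc⟩
  by_contra hsc
  exact h2 c hc (fun h => hsc h.symm) (hadj w hw hwc).symm

inductive Bd (G : SimpleGraph V) (K : Finset V) : Finset V → Finset (Finset V) → Prop
  | base : Bd G K K ∅
  | step {A : Finset V} {P : Finset (Finset V)} {S : Finset V} {x y : V} :
      Bd G K A P → Att G A S x y → (Sh3 G S ∨ Sh4 G S ∨ Sh5 G S) → Bd G K (A ∪ S) (insert S P)

namespace Bd

variable {G : SimpleGraph V} {K A : Finset V} {P : Finset (Finset V)}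

theorem K_sub (h : Bd G K A P) : K ⊆ A := by
  induction h with
  | base => exact subset_rfl
  | step _ _ _ ih => exact ih.trans Finset.subset_union_left

theorem S_sub (h : Bd G K A P) : ∀ S ∈ P, S ⊆ A := by
  induction h with
  | base => simp
  | step _ _ _ ih =>
    intro S hS
    rcases Finset.mem_insert.1 hS with rfl | hS
    · exact Finset.subset_union_right
    · exact (ih S hS).trans Finset.subset_union_left

theorem notin (h : Bd G K A P) {S : Finset V} {x y : V} (hA : Att G A S x y) : S ∉ P := by
  intro hS
  exact Finset.disjoint_left.1 hA.disj (h.S_sub S hS hA.hx) hA.hx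

theorem mem_cases (h : Bd G K A P) : ∀ v ∈ A, v ∈ K ∨ ∃ S ∈ P, v ∈ S := by
  induction h with
  | base => intro v hv; exact Or.inl hv
  | @step A P S x y _ _ _ ih =>
    intro v hv
    rcases Finset.mem_union.1 hv with hv | hv
    · rcases ih v hv with h | ⟨S', h1, h2⟩
      · exact Or.inl h
      · exact Or.inr ⟨S', Finset.mem_insert_of_mem h1, h2⟩
    · exact Or.inr ⟨S, Finset.mem_insert_self _ _, hv⟩

theorem disjK (h : Bd G K A P) : ∀ S ∈ P, Disjoint K S := by
  induction h with
  | base => simp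
  | step hb hA _ ih =>
    intro S hS
    rcases Finset.mem_insert.1 hS with rfl | hS
    · exact hA.disj.mono_left hb.K_sub
    · exact ih S hS

theorem disjP (h : Bd G K A P) : ∀ S ∈ P, ∀ T ∈ P, S ≠ T → Disjoint S T := by
  induction h with
  | base => simp
  | step hb hA _ ih =>
    intro S hS T hT hne
    rcases Finset.mem_insert.1 hS with h1 | h1 <;> rcases Finset.mem_insert.1 hT with h2 | h2
    · exact absurd (h1.trans h2.symm) hne
    · subst h1; exact (hA.disj.mono_left (hb.S_sub T h2)).symm
    · subst h2; exact (hA.disj.mono_left (hb.S_sub S h1))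
    · exact ih S h1 T h2 hne

theorem shape (h : Bd G K A P) : ∀ S ∈ P, Sh3 G S ∨ Sh4 G S ∨ Sh5 G S := by
  induction h with
  | base => simp
  | step hb hA hs ih =>
    intro S hS
    rcases Finset.mem_insert.1 hS with rfl | hS
    · exact hs
    · exact ih S hS

theorem card_eq (h : Bd G K A P) : A.card = K.card + ∑ S ∈ P, S.card := by
  induction h with
  | base => simp
  | step hb hA hs ih =>
    rw [Finset.sum_insert (hb.notin hA), Finset.card_union_of_disjoint hA.disj, ih]
    omega

theorem inter_eq {A D T : Finset V} (hT : T ⊆ A) : D ∩ A ∩ T = D ∩ T := by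
  ext z
  have := @hT z
  simp only [Finset.mem_inter]
  tauto

theorem memK (h : Bd G K A P) : ∀ D ∈ MD G A, D ∩ K ∈ MD G K := by
  induction h with
  | base =>
    intro D hD
    rwa [Finset.inter_eq_left.2 (mem_MD.1 hD).1]
  | step hb hA hs ih =>
    intro D hD
    have := ih _ (att_step hA hD).1
    rwa [inter_eq hb.K_sub] at this

theorem memS (h : Bd G K A P) : ∀ D ∈ MD G A, ∀ S ∈ P, ∃ s ∈ opt G S, D ∩ S = {s} := by
  induction h with
  | base => simp
  | step hb hA hs ih =>
    intro D hD S hS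
    rcases Finset.mem_insert.1 hS with rfl | hS
    · exact (att_step hA hD).2
    · have := ih _ (att_step hA hD).1 S hS
      rwa [inter_eq (hb.S_sub S hS)] at this

theorem crude (h : Bd G K A P) (q : Finset V → Prop) (r : Finset V → Finset V) :
    cnt G A (fun D => q (D ∩ K) ∧ ∀ S ∈ P, D ∩ S ⊆ r S) ≤
      cnt G K q * ∏ S ∈ P, (opt G S ∩ r S).card := by
  induction h with
  | base =>
    unfold cnt
    simp only [Finset.prod_empty, mul_one]
    apply Finset.card_le_card
    intro D hD
    simp only [Finset.mem_filter] at hD ⊢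
    have := (mem_MD.1 hD.1).1
    rw [Finset.inter_eq_left.2 this] at hD
    exact ⟨hD.1, hD.2.1⟩
  | @step A P S x y hb hA hs ih =>
    rw [Finset.prod_insert (hb.notin hA), mul_left_comm, mul_comm]
    refine le_trans ?_ (Nat.mul_le_mul_right _ ih)
    unfold cnt
    rw [← Finset.card_product]
    have hne : ∀ D ∈ MD G (A ∪ S), ∃ s, s ∈ opt G S ∧ D ∩ S = {s} := fun D hD => by
      obtain ⟨s, h1, h2⟩ := (att_step hA hD).2
      exact ⟨s, h1, h2⟩
    have : Nonempty V := ⟨x⟩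
    choose! f hf1 hf2 using hne
    refine Finset.card_le_card_of_injOn (fun D => (D ∩ A, f D)) ?_ ?_
    · intro D hD
      simp only [Finset.coe_filter, Set.mem_ofPred_eq] at hD
      obtain ⟨hD, hq, hr⟩ := hD
      simp only [Finset.coe_product, Set.mem_prod, Finset.mem_coe, Finset.mem_filter, Finset.mem_inter]
      refine ⟨⟨(att_step hA hD).1, ?_, ?_⟩, hf1 D hD, ?_⟩
      · rwa [inter_eq hb.K_sub]
      · intro T hT
        rw [inter_eq (hb.S_sub T hT)]
        exact hr T (Finset.mem_insert_of_mem hT)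
      · apply hr S (Finset.mem_insert_self _ _)
        rw [hf2 D hD]; simp
    · intro D hD E hE hDE
      simp only [Finset.coe_filter, Set.mem_ofPred_eq] at hD hE
      simp only [Prod.mk.injEq] at hDE
      have h1 : D ∩ S = E ∩ S := by rw [hf2 D hD.1, hf2 E hE.1, hDE.2]
      have h2 := (mem_MD.1 hD.1).1
      have h3 := (mem_MD.1 hE.1).1
      rw [← Finset.inter_eq_left.2 h2, ← Finset.inter_eq_left.2 h3, Finset.inter_union_distrib_left,
        Finset.inter_union_distrib_left, h1, hDE.1]

/-- general crude bound -/
theorem crude' (h : Bd G K A P) (q : Finset V → Prop) (r : Finset V → Finset V)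
    (Φ : Finset V → Prop)
    (hΦ : ∀ D ∈ MD G A, Φ D → q (D ∩ K) ∧ ∀ S ∈ P, D ∩ S ⊆ r S) :
    cnt G A Φ ≤
      cnt G K q * ∏ S ∈ P, (opt G S ∩ r S).card := by
  exact le_trans (cnt_mono hΦ) (h.crude q r)

theorem crude0 (h : Bd G K A P) (q : Finset V → Prop) (Φ : Finset V → Prop)
    (hΦ : ∀ D ∈ MD G A, Φ D → q (D ∩ K)) :
    cnt G A Φ ≤ cnt G K q * ∏ S ∈ P, (opt G S).card := by
  refine (h.crude' q id Φ (fun D hD hd => ⟨hΦ D hD hd, fun S _ => Finset.inter_subset_right⟩)).trans ?_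
  refine Nat.mul_le_mul_left _ (Finset.prod_le_prod' fun S _ => Finset.card_le_card Finset.inter_subset_left)

theorem crude1 (h : Bd G K A P) (q : Finset V → Prop) (Φ : Finset V → Prop) {S : Finset V}
    (hS : S ∈ P) (X : Finset V)
    (hΦ : ∀ D ∈ MD G A, Φ D → q (D ∩ K) ∧ D ∩ S ⊆ X) :
    cnt G A Φ ≤
      cnt G K q * (X.card * ∏ S ∈ P.erase S, (opt G S).card) := by
  refine (h.crude' q (fun T => if T = S then X else T) Φ (fun D hD hd => ⟨(hΦ D hD hd).1, ?_⟩)).trans ?_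
  · intro T _
    by_cases hT : T = S
    · subst hT; simpa using (hΦ D hD hd).2
    · simp [hT]
  · refine Nat.mul_le_mul_left _ ?_
    rw [← Finset.mul_prod_erase _ _ hS]
    refine Nat.mul_le_mul ?_ (Finset.prod_le_prod' fun S _ => Finset.card_le_card Finset.inter_subset_left)
    simpa using Finset.card_le_card Finset.inter_subset_right

theorem crude2 (h : Bd G K A P) (q : Finset V → Prop) (Φ : Finset V → Prop) {S T : Finset V}
    (hS : S ∈ P) (hT : T ∈ P) (hne : S ≠ T) (X Y : Finset V)
    (hΦ : ∀ D ∈ MD G A, Φ D → q (D ∩ K) ∧ D ∩ S ⊆ X ∧ D ∩ T ⊆ Y) :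
    cnt G A Φ ≤
      cnt G K q *
        (X.card * (Y.card * ∏ S ∈ (P.erase S).erase T, (opt G S).card)) := by
  refine (h.crude' q (fun U => if U = S then X else if U = T then Y else U) Φ
    (fun D hD hd => ⟨(hΦ D hD hd).1, ?_⟩)).trans ?_
  · intro U _
    by_cases hU : U = S
    · subst hU; simpa using (hΦ D hD hd).2.1
    · by_cases hU' : U = T
      · subst hU'; simpa [hU] using (hΦ D hD hd).2.2
      · simp [hU, hU']
  · refine Nat.mul_le_mul_left _ ?_
    rw [← Finset.mul_prod_erase _ _ hS, ← Finset.mul_prod_erase _ _ (Finset.mem_erase.2 ⟨hne.symm, hT⟩)]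
    refine Nat.mul_le_mul ?_ (Nat.mul_le_mul ?_
      (Finset.prod_le_prod' fun S _ => Finset.card_le_card Finset.inter_subset_left))
    · simpa using Finset.card_le_card Finset.inter_subset_right
    · simpa [hne.symm] using Finset.card_le_card Finset.inter_subset_right

end Bd

theorem att_compat {G : SimpleGraph V} {A S : Finset V} {x y : V} (h : Att G A S x y)
    {D : Finset V} (hD : D ∈ MD G (A ∪ S)) {s : V} (hs : D ∩ S = {s}) (hsx : s ≠ x) :
    y ∈ D ∩ A ∨ (Iso G A (D ∩ A) y ∧ Iso G S {s} x) := by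
  have hxD : x ∉ D := fun hx => hsx (by
    have : x ∈ D ∩ S := Finset.mem_inter.2 ⟨hx, h.hx⟩
    rw [hs, Finset.mem_singleton] at this
    exact this.symm)
  by_cases hy : y ∈ D
  · exact Or.inl (Finset.mem_inter.2 ⟨hy, h.hy⟩)
  · right
    have hd := MD_Ds hD
    refine ⟨Iso_of_adj hd Finset.subset_union_left h.hy (Finset.mem_union_right _ h.hx)
      (fun hx => Finset.disjoint_left.1 h.disj hx h.hx) hy hxD h.adj.symm, ?_⟩
    rw [← hs]
    exact Iso_of_adj hd Finset.subset_union_right h.hx (Finset.mem_union_left _ h.hy)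
      (fun hx => Finset.disjoint_left.1 h.disj h.hy hx) hxD hy h.adj

theorem att_fib {G : SimpleGraph V} {A S : Finset V} {x y : V} (h : Att G A S x y)
    (Φ Ψ : Finset V → Prop) (s : V)
    (hΦ : ∀ D ∈ MD G (A ∪ S), Φ D → D ∩ S = {s} ∧ Ψ (D ∩ A)) :
    cnt G (A ∪ S) Φ ≤ cnt G A Ψ := by
  unfold cnt
  refine Finset.card_le_card_of_injOn (fun D => D ∩ A) ?_ ?_
  · intro D hD
    simp only [Finset.coe_filter, Set.mem_ofPred_eq] at hD ⊢
    exact ⟨(att_step h hD.1).1, (hΦ D hD.1 hD.2).2⟩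
  · intro D hD E hE hDE
    simp only [Finset.coe_filter, Set.mem_ofPred_eq] at hD hE hDE
    have h2 := (mem_MD.1 hD.1).1
    have h3 := (mem_MD.1 hE.1).1
    rw [← Finset.inter_eq_left.2 h2, ← Finset.inter_eq_left.2 h3, Finset.inter_union_distrib_left,
        Finset.inter_union_distrib_left, (hΦ D hD.1 hD.2).1, (hΦ E hE.1 hE.2).1, hDE]

theorem att_sum {G : SimpleGraph V} {A S : Finset V} {x y : V} (h : Att G A S x y)
    (Φ : Finset V → Prop) :
    cnt G (A ∪ S) Φ ≤
      ∑ s ∈ opt G S, cnt G (A ∪ S) (fun D => Φ D ∧ D ∩ S = {s}) := by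
  unfold cnt
  refine le_trans (Finset.card_le_card ?_) Finset.card_biUnion_le
  intro D hD
  simp only [Finset.mem_filter, Finset.mem_biUnion] at hD ⊢
  obtain ⟨s, hs, hs'⟩ := (att_step h hD.1).2
  exact ⟨s, hs, hD.1, hD.2, hs'⟩

theorem opt_sub (G : SimpleGraph V) (S : Finset V) : opt G S ⊆ S := Finset.filter_subset _ _

theorem att_x_opt {G : SimpleGraph V} {A S : Finset V} {x y : V} (h : Att G A S x y) :
    x ∈ opt G S := by
  simp only [opt, Finset.mem_filter]
  exact ⟨h.hx, h.ds⟩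

theorem inc3 {G : SimpleGraph V} {A S : Finset V} {x y : V} (h : Att G A S x y)
    (h3 : Sh3 G S) (Φ Q : Finset V → Prop) (hΦ : ∀ D ∈ MD G (A ∪ S), Φ D → Q (D ∩ A)) :
    cnt G (A ∪ S) Φ ≤ cnt G A Q
      + 2 * cnt G A (fun D => Q D ∧ y ∈ D)
      + cnt G A (fun D => Q D ∧ Iso G A D y) := by
  obtain ⟨c, hc, hcc⟩ := Sh3_center h3
  refine (att_sum h Φ).trans ?_
  refine (Finset.sum_le_sum_of_subset (opt_sub G S)).trans ?_
  rw [← Finset.add_sum_erase _ _ h.hx, add_assoc]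
  refine Nat.add_le_add ?_ ?_
  · exact att_fib h _ _ x (fun D hD hd => ⟨hd.2, hΦ D hD hd.1⟩)
  · set X := cnt G A (fun D => Q D ∧ y ∈ D) with hX
    set Y := cnt G A (fun D => Q D ∧ Iso G A D y) with hY
    have hcard : (S.erase x).card = 2 := by rw [Finset.card_erase_of_mem h.hx, h3.1]
    have : ∀ s ∈ S.erase x, cnt G (A ∪ S) (fun D => Φ D ∧ D ∩ S = {s})
        ≤ X + if s = c then Y else 0 := by
      intro s hs
      obtain ⟨hsx, hsS⟩ := Finset.mem_erase.1 hs
      by_cases hsc : s = c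
      · rw [if_pos hsc]
        refine (att_fib h _ (fun D => (Q D ∧ y ∈ D) ∨ (Q D ∧ Iso G A D y)) s ?_).trans
          (cnt_or fun _ _ h => h)
        intro D hD hd
        refine ⟨hd.2, ?_⟩
        rcases att_compat h hD hd.2 hsx with h1 | h1
        · exact Or.inl ⟨hΦ D hD hd.1, h1⟩
        · exact Or.inr ⟨hΦ D hD hd.1, h1.1⟩
      · rw [if_neg hsc, add_zero]
        refine (att_fib h _ (fun D => (Q D ∧ y ∈ D)) s ?_)
        intro D hD hd
        refine ⟨hd.2, hΦ D hD hd.1, ?_⟩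
        rcases att_compat h hD hd.2 hsx with h1 | h1
        · exact h1
        · exact absurd (hcc s hsS x h.hx h1.2).1 hsc
    refine (Finset.sum_le_sum this).trans ?_
    rw [Finset.sum_add_distrib, Finset.sum_const, hcard, smul_eq_mul, Finset.sum_ite_eq']
    split_ifs <;> omega

theorem inc4 {G : SimpleGraph V} {A S : Finset V} {x y : V} (h : Att G A S x y)
    (h4 : Sh4 G S) :
    (MD G (A ∪ S)).card ≤ (MD G A).card + cnt G A (fun D => y ∈ D) := by
  have h0 := att_sum h (fun _ => True)
  rw [cnt_true] at h0
  refine h0.trans ?_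
  rw [← Finset.add_sum_erase _ _ (att_x_opt h)]
  refine Nat.add_le_add ?_ ?_
  · refine (att_fib h _ (fun _ => True) x (fun D hD hd => ⟨hd.2, trivial⟩)).trans ?_
    rw [cnt_true]
  · refine (Finset.sum_le_card_nsmul _ _ (cnt G A (fun D => y ∈ D)) ?_).trans ?_
    · intro s hs
      obtain ⟨hsx, hsS⟩ := Finset.mem_erase.1 hs
      refine (att_fib h _ (fun D => y ∈ D) s ?_)
      intro D hD hd
      refine ⟨hd.2, ?_⟩
      rcases att_compat h hD hd.2 hsx with h1 | h1
      · exact h1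
      · exact absurd h1.2 ((h4.2.2 x h.hx).1 (att_x_opt h) s hsS)
    · have : ((opt G S).erase x).card ≤ 1 := by
        rw [Finset.card_erase_of_mem (att_x_opt h)]
        have := h4.2.1
        omega
      rw [smul_eq_mul]
      calc _ ≤ 1 * _ := Nat.mul_le_mul_right _ this
        _ = _ := one_mul _

/-- deleted or isolated, for a vertex of the newly attached cluster -/
theorem inc3_new {G : SimpleGraph V} {A S : Finset V} {x y v : V} (h : Att G A S x y)
    (h3 : Sh3 G S) (hv : v ∈ S) :
    cnt G (A ∪ S) (fun D => v ∈ D ∨ Iso G (A ∪ S) D v) ≤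
      (MD G A).card + cnt G A (fun D => y ∈ D) := by
  obtain ⟨c, hc, hcc⟩ := Sh3_center h3
  refine (att_sum h _).trans ?_
  refine (Finset.sum_le_sum_of_subset (opt_sub G S)).trans ?_
  set X := cnt G A (fun D => y ∈ D) with hX
  set m := (MD G A).card with hm
  set g : V → ℕ := fun s => cnt G (A ∪ S) (fun D => (v ∈ D ∨ Iso G (A ∪ S) D v) ∧ D ∩ S = {s}) with hg
  have hmem : ∀ D : Finset V, ∀ s, D ∩ S = {s} → ∀ w ∈ S, w ∈ D → w = s := by
    intro D s hs w hw hwD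
    have : w ∈ D ∩ S := Finset.mem_inter.2 ⟨hwD, hw⟩
    rwa [hs, Finset.mem_singleton] at this
  have hmem' : ∀ D : Finset V, ∀ s, D ∩ S = {s} → s ∈ D := by
    intro D s hs
    have : s ∈ D ∩ S := by rw [hs]; simp
    exact (Finset.mem_inter.1 this).1
  have hiso : ∀ D s, D ∩ S = {s} → Iso G (A ∪ S) D v → Iso G S {s} v := by
    intro D s hs hI
    rw [← hs]
    exact Iso_restrict hI Finset.subset_union_right hv
  have gm : ∀ s, g s ≤ m := by
    intro s
    refine (att_fib h _ (fun _ => True) s (fun D hD hd => ⟨hd.2, trivial⟩)).trans ?_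
    rw [cnt_true]
  have gz : ∀ s, (∀ D ∈ MD G (A ∪ S), D ∩ S = {s} → ¬ (v ∈ D ∨ Iso G (A ∪ S) D v)) → g s = 0 := by
    intro s hs
    exact cnt_zero (fun D hD h1 => hs D hD h1.2 h1.1)
  have gX : ∀ s, (∀ D ∈ MD G (A ∪ S), D ∩ S = {s} → (v ∈ D ∨ Iso G (A ∪ S) D v) → y ∈ D ∩ A) →
      g s ≤ X := by
    intro s hs
    exact att_fib h _ _ s (fun D hD hd => ⟨hd.2, hs D hD hd.2 hd.1⟩)
  have fin : ∀ s1 s2, (∀ s ∈ S, g s ≤ (if s = s1 then m else 0) + (if s = s2 then X else 0)) →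
      ∑ s ∈ S, g s ≤ m + X := by
    intro s1 s2 hs
    refine (Finset.sum_le_sum hs).trans ?_
    rw [Finset.sum_add_distrib, Finset.sum_ite_eq', Finset.sum_ite_eq']
    split_ifs <;> omega
  by_cases hvx : v = x
  · subst hvx
    refine fin v c (fun s hs => ?_)
    by_cases hsx : s = v
    · have := gm s
      rw [if_pos hsx]; omega
    · rw [if_neg hsx, zero_add]
      by_cases hsc : s = c
      · rw [if_pos hsc]
        refine gX s (fun D hD hd ho => ?_)
        rcases ho with ho | ho
        · exact absurd (hmem D s hd v hv ho).symm hsx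
        · by_contra hy
          refine ho.2.2 y (Finset.mem_union_left _ h.hy) ?_ h.adj
          exact fun hyD => hy (Finset.mem_inter.2 ⟨hyD, h.hy⟩)
      · rw [if_neg hsc, gz s]
        rintro D hD hd (ho | ho)
        · exact hsx (hmem D s hd v hv ho).symm
        · exact hsc (hcc s hs v hv (hiso D s hd ho)).1
  · by_cases hxc : x = c
    · subst hxc
      refine fin x v (fun s hs => ?_)
      by_cases hsx : s = x
      · have := gm s
        rw [if_pos hsx]; omega
      · rw [if_neg hsx, zero_add]
        by_cases hsv : s = v
        · rw [if_pos hsv]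
          refine gX s (fun D hD hd ho => ?_)
          rcases att_compat h hD hd hsx with h1 | h1
          · exact h1
          · exact absurd (hcc s hs x h.hx h1.2).1 hsx
        · rw [if_neg hsv, gz s]
          rintro D hD hd (ho | ho)
          · exact hsv (hmem D s hd v hv ho).symm
          · exact hsx (hcc s hs v hv (hiso D s hd ho)).1
    · have hgx : g x = 0 := by
        apply gz
        rintro D hD hd (ho | ho)
        · exact hvx (hmem D x hd v hv ho)
        · exact hxc (hcc x h.hx v hv (hiso D x hd ho)).1
      change ∑ s ∈ S, g s ≤ m + X
      rw [← Finset.add_sum_erase _ _ h.hx, hgx, zero_add,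
        ← Finset.add_sum_erase _ _ (Finset.mem_erase.2 ⟨Ne.symm hxc, hc⟩)]
      refine Nat.add_le_add (gm c) ?_
      have hcard : ((S.erase x).erase c).card = 1 := by
        rw [Finset.card_erase_of_mem (Finset.mem_erase.2 ⟨Ne.symm hxc, hc⟩),
          Finset.card_erase_of_mem h.hx, h3.1]
      refine (Finset.sum_le_card_nsmul _ _ X ?_).trans (by rw [hcard, one_smul])
      intro s hs
      simp only [Finset.mem_erase] at hs
      refine gX s (fun D hD hd ho => ?_)
      rcases att_compat h hD hd hs.2.1 with h1 | h1
      · exact h1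
      · exact absurd (hcc s hs.2.2 x h.hx h1.2).1 hs.1

theorem del_add_iso (G : SimpleGraph V) (A : Finset V) (v : V) :
    cnt G A (fun D => v ∈ D ∨ Iso G A D v) =
      cnt G A (fun D => v ∈ D) + cnt G A (fun D => Iso G A D v) := by
  refine le_antisymm (cnt_or fun _ _ h => h) ?_
  unfold cnt
  rw [← Finset.card_union_of_disjoint]
  · apply Finset.card_le_card
    intro D hD
    simp only [Finset.mem_filter, Finset.mem_union] at hD ⊢
    tauto
  · rw [Finset.disjoint_left]
    intro D h1 h2
    simp only [Finset.mem_filter] at h1 h2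
    exact h2.2.2.1 h1.2

theorem opt3 {G : SimpleGraph V} {S : Finset V} (h : Sh3 G S) : (opt G S).card ≤ 3 := by
  have := Finset.card_le_card (opt_sub G S)
  rwa [h.1] at this

theorem pr3 {G : SimpleGraph V} {P : Finset (Finset V)} (h : ∀ S ∈ P, Sh3 G S) :
    ∏ S ∈ P, (opt G S).card ≤ 3 ^ P.card := by
  refine Finset.prod_le_pow_card _ _ _ (fun S hS => opt3 (h S hS))

theorem pr3e {G : SimpleGraph V} {P : Finset (Finset V)} {S : Finset V} {p : ℕ}
    (h : ∀ T ∈ P.erase S, Sh3 G T) (hS : S ∈ P) (hp : P.card = p + 1) :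
    ∏ T ∈ P.erase S, (opt G T).card ≤ 3 ^ p := by
  refine (pr3 h).trans ?_
  rw [Finset.card_erase_of_mem hS, hp, Nat.add_sub_cancel]

theorem pr3ee {G : SimpleGraph V} {P : Finset (Finset V)} {S T : Finset V} {p : ℕ}
    (h : ∀ U ∈ (P.erase S).erase T, Sh3 G U) (hS : S ∈ P) (hT : T ∈ P) (hne : S ≠ T)
    (hp : P.card = p + 2) :
    ∏ U ∈ (P.erase S).erase T, (opt G U).card ≤ 3 ^ p := by
  refine pr3e h (Finset.mem_erase.2 ⟨hne.symm, hT⟩) ?_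
  rw [Finset.card_erase_of_mem hS, hp]
  rfl

namespace Bd

variable {G : SimpleGraph V} {K A : Finset V} {P : Finset (Finset V)}

theorem c0 (h : Bd G K A P) (q : Finset V → Prop) {Φ : Finset V → Prop} {a w : ℕ}
    (ha : cnt G K q ≤ a) (hw : ∏ S ∈ P, (opt G S).card ≤ w)
    (hΦ : ∀ D ∈ MD G A, Φ D → q (D ∩ K)) : cnt G A Φ ≤ a * w :=
  (h.crude0 q Φ hΦ).trans (Nat.mul_le_mul ha hw)

theorem c1 (h : Bd G K A P) (q : Finset V → Prop) {Φ : Finset V → Prop} {a b w : ℕ} {S : Finset V}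
    (hS : S ∈ P) (X : Finset V)
    (ha : cnt G K q ≤ a) (hb : X.card ≤ b) (hw : ∏ S ∈ P.erase S, (opt G S).card ≤ w)
    (hΦ : ∀ D ∈ MD G A, Φ D → q (D ∩ K) ∧ D ∩ S ⊆ X) : cnt G A Φ ≤ a * (b * w) :=
  (h.crude1 q Φ hS X hΦ).trans (Nat.mul_le_mul ha (Nat.mul_le_mul hb hw))

theorem c2 (h : Bd G K A P) (q : Finset V → Prop) {Φ : Finset V → Prop} {a b c w : ℕ}
    {S T : Finset V} (hS : S ∈ P) (hT : T ∈ P) (hne : S ≠ T) (X Y : Finset V)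
    (ha : cnt G K q ≤ a) (hb : X.card ≤ b) (hc : Y.card ≤ c)
    (hw : ∏ S ∈ (P.erase S).erase T, (opt G S).card ≤ w)
    (hΦ : ∀ D ∈ MD G A, Φ D → q (D ∩ K) ∧ D ∩ S ⊆ X ∧ D ∩ T ⊆ Y) :
    cnt G A Φ ≤ a * (b * (c * w)) :=
  (h.crude2 q Φ hS hT hne X Y hΦ).trans
    (Nat.mul_le_mul ha (Nat.mul_le_mul hb (Nat.mul_le_mul hc hw)))

theorem sub1 (h : Bd G K A P) {D S : Finset V} (hD : D ∈ MD G A) (hS : S ∈ P) {v : V}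
    (hv : v ∈ S) (hvD : v ∈ D) : D ∩ S = {v} := by
  obtain ⟨s, _, hs⟩ := h.memS D hD S hS
  have : v ∈ D ∩ S := Finset.mem_inter.2 ⟨hvD, hv⟩
  rw [hs, Finset.mem_singleton] at this
  rw [hs, this]

theorem subc (h : Bd G K A P) {D S : Finset V} (hD : D ∈ MD G A) (hS : S ∈ P) {v c : V}
    (hv : v ∈ S) (hcc : ∀ s ∈ S, ∀ w ∈ S, Iso G S {s} w → s = c ∧ w ≠ c)
    (hI : Iso G S (D ∩ S) v) : D ∩ S = {c} ∧ v ≠ c := by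
  obtain ⟨s, hs', hs⟩ := h.memS D hD S hS
  rw [hs] at hI
  obtain ⟨h1, h2⟩ := hcc s (opt_sub G S hs') v hv hI
  rw [hs, h1]
  exact ⟨rfl, h2⟩

theorem subcI (h : Bd G K A P) {D S : Finset V} (hD : D ∈ MD G A) (hS : S ∈ P) {v c : V}
    (hv : v ∈ S) (hcc : ∀ s ∈ S, ∀ w ∈ S, Iso G S {s} w → s = c ∧ w ≠ c)
    (hI : Iso G A D v) : D ∩ S = {c} ∧ v ≠ c :=
  h.subc hD hS hv hcc (Iso_restrict hI (h.S_sub S hS) hv)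

theorem not_mem_K (h : Bd G K A P) {S : Finset V} (hS : S ∈ P) {v : V} (hv : v ∈ S) : v ∉ K :=
  fun hK => Finset.disjoint_left.1 (h.disjK S hS) hK hv

theorem eq_of_empty (h : Bd G K A P) (hP : P = ∅) : A = K := by
  induction h with
  | base => rfl
  | step => exact absurd hP (Finset.insert_ne_empty _ _)

theorem exists_root (h : Bd G K A P) {u : V}
    (hu : ∀ y ∈ K, ∀ x, x ∉ K → G.Adj x y → y = u) (hP : P.Nonempty) :
    ∃ S ∈ P, ∃ x ∈ S, G.Adj x u := by
  induction h with
  | base => simp at hP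
  | @step A P S x y hb hA hs ih =>
    by_cases hP' : P.Nonempty
    · obtain ⟨T, hT, h'⟩ := ih hP'
      exact ⟨T, Finset.mem_insert_of_mem hT, h'⟩
    · have := hb.eq_of_empty (Finset.not_nonempty_iff_eq_empty.1 hP')
      subst this
      have hy := hu y hA.hy x (fun hx => Finset.disjoint_left.1 hA.disj hx hA.hx) hA.adj
      exact ⟨S, Finset.mem_insert_self _ _, x, hA.hx, hy ▸ hA.adj⟩

theorem nonstar_pair (h : Bd G K A P) {u : V}
    (hu : ∀ y ∈ K, ∀ x, x ∉ K → G.Adj x y → y = u) (hP : ¬ ∀ S ∈ P, ∃ x ∈ S, G.Adj x u) :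
    ∃ S ∈ P, ∃ T ∈ P, S ≠ T ∧ ∃ v ∈ S, ∃ x ∈ T, G.Adj v x := by
  induction h with
  | base => simp at hP
  | @step A P S x y hb hA hs ih =>
    by_cases hP' : ∀ S ∈ P, ∃ x ∈ S, G.Adj x u
    · rcases hb.mem_cases y hA.hy with hy | ⟨T, hT, hy⟩
      · exfalso
        have hyu := hu y hy x (fun hx => Finset.disjoint_left.1 hA.disj (hb.K_sub hx) hA.hx) hA.adj
        apply hP
        intro T hT
        rcases Finset.mem_insert.1 hT with rfl | hT
        · exact ⟨x, hA.hx, hyu ▸ hA.adj⟩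
        · exact hP' T hT
      · refine ⟨S, Finset.mem_insert_self _ _, T, Finset.mem_insert_of_mem hT, ?_, x, hA.hx, y, hy, hA.adj⟩
        rintro rfl
        exact hb.notin hA hT
    · obtain ⟨S, hS, T, hT, h'⟩ := ih hP'
      exact ⟨S, Finset.mem_insert_of_mem hS, T, Finset.mem_insert_of_mem hT, h'⟩

end Bd

/-- data on the core of type 1 -/
structure Core1 (G : SimpleGraph V) (K : Finset V) (u : V) (j : ℕ) : Prop where
  hj : 1 ≤ j
  huK : u ∈ K
  hu : ∀ y ∈ K, ∀ x, x ∉ K → G.Adj x y → y = u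
  hm : (MD G K).card ≤ 3 * j + 2
  hx : cnt G K (fun D => u ∈ D) ≤ j + 1
  hy : cnt G K (fun D => Iso G K D u) ≤ 1

namespace Core1

variable {G : SimpleGraph V} {K A : Finset V} {P : Finset (Finset V)} {u : V} {j : ℕ}

theorem hT (hc : Core1 G K u j) : cnt G K (fun _ => True) ≤ 3 * j + 2 := by
  rw [cnt_true]; exact hc.hm

theorem att_K (hc : Core1 G K u j) (h : Bd G K A P) {S : Finset V} {x y : V}
    (hA : Att G A S x y) (hy : y ∈ K) : y = u :=
  hc.hu y hy x (fun hx => Finset.disjoint_left.1 hA.disj (h.K_sub hx) hA.hx) hA.adj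

theorem xu (hc : Core1 G K u j) (h : Bd G K A P) {w : ℕ} (hw : ∏ S ∈ P, (opt G S).card ≤ w) :
    cnt G A (fun D => u ∈ D) ≤ (j + 1) * w :=
  h.c0 (fun D => u ∈ D) hc.hx hw (fun _ _ hd => Finset.mem_inter.2 ⟨hd, hc.huK⟩)

theorem yu (hc : Core1 G K u j) (h : Bd G K A P) {S : Finset V} (hS : S ∈ P) {x : V} (hx : x ∈ S)
    (hxu : G.Adj x u) {w : ℕ} (hw : ∏ S ∈ P.erase S, (opt G S).card ≤ w) :
    cnt G A (fun D => Iso G A D u) ≤ w := by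
  have := h.c1 (fun D => Iso G K D u) (Φ := fun D => Iso G A D u) (b := 1) hS {x} hc.hy (by simp) hw ?_
  · simpa using this
  · intro D hD hI
    refine ⟨Iso_restrict hI h.K_sub hc.huK, ?_⟩
    have hxD : x ∈ D := by
      by_contra hxD
      exact hI.2.2 x (h.S_sub S hS hx) hxD hxu.symm
    rw [h.sub1 hD hS hx hxD]

theorem yu_star (hc : Core1 G K u j) (h : Bd G K A P) (hst : ∀ S ∈ P, ∃ x ∈ S, G.Adj x u) :
    cnt G A (fun D => Iso G A D u) ≤ 1 := by
  have : Nonempty V := ⟨u⟩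
  choose! f hf1 hf2 using hst
  refine (h.crude' (fun D => Iso G K D u) (fun S => {f S}) _ ?_).trans ?_
  · intro D hD hI
    refine ⟨Iso_restrict hI h.K_sub hc.huK, fun S hS => ?_⟩
    have hxD : f S ∈ D := by
      by_contra hxD
      exact hI.2.2 (f S) (h.S_sub S hS (hf1 S hS)) hxD (hf2 S hS).symm
    rw [h.sub1 hD hS (hf1 S hS) hxD]
  · have h1 : ∏ S ∈ P, (opt G S ∩ {f S}).card ≤ 1 := by
      refine (Finset.prod_le_pow_card _ _ 1 (fun S _ => ?_)).trans (by simp)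
      exact (Finset.card_le_card Finset.inter_subset_right).trans (by simp)
    calc _ ≤ 1 * 1 := Nat.mul_le_mul hc.hy h1
      _ = 1 := rfl

theorem xv (hc : Core1 G K u j) (h : Bd G K A P) {S : Finset V} (hS : S ∈ P) {v : V} (hv : v ∈ S)
    {w : ℕ} (hw : ∏ S ∈ P.erase S, (opt G S).card ≤ w) :
    cnt G A (fun D => v ∈ D) ≤ (3 * j + 2) * w := by
  have := h.c1 (fun _ => True) (Φ := fun D => v ∈ D) (b := 1) hS {v} hc.hT (by simp) hw
    (fun D hD hd => ⟨trivial, (h.sub1 hD hS hv hd).subset⟩)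
  simpa using this

/-- deletion of `u` when some cluster is not attached to `u` -/
theorem xu_nonstar (hc : Core1 G K u j) (h : Bd G K A P) (h3 : ∀ S ∈ P, Sh3 G S) {r : ℕ}
    (hp : P.card = r + 2) (hst : ¬ ∀ S ∈ P, ∃ x ∈ S, G.Adj x u) :
    cnt G A (fun D => u ∈ D) ≤ (j + 1) * (6 * 3 ^ r) := by
  obtain ⟨S, hS, T, hT, hne, v, hv, x, hx, hadj⟩ := h.nonstar_pair hc.hu hst
  obtain ⟨c, hcS, hcc⟩ := Sh3_center (h3 S hS)
  obtain ⟨d, hdT, hdd⟩ := Sh3_center (h3 T hT)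
  have huK : ∀ D : Finset V, u ∈ D → u ∈ D ∩ K := fun D hd => Finset.mem_inter.2 ⟨hd, hc.huK⟩
  have he : ∀ U ∈ P.erase T, Sh3 G U := fun U hU => h3 U (Finset.mem_of_mem_erase hU)
  have hee : ∀ U ∈ (P.erase S).erase T, Sh3 G U := fun U hU =>
    h3 U (Finset.mem_of_mem_erase (Finset.mem_of_mem_erase hU))
  have b1 : cnt G A (fun D => u ∈ D ∧ x ∈ D) ≤ (j + 1) * (1 * 3 ^ (r + 1)) :=
    h.c1 (fun D => u ∈ D) hT {x} hc.hx (by simp) (pr3e he hT hp)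
      (fun D hD hd => ⟨huK D hd.1, (h.sub1 hD hT hx hd.2).subset⟩)
  have b2 : cnt G A (fun D => u ∈ D ∧ x ∉ D ∧ v ∈ D) ≤ (j + 1) * (1 * (2 * 3 ^ r)) := by
    refine h.c2 (fun D => u ∈ D) hS hT hne {v} (T.erase x) hc.hx (by simp) ?_
      (pr3ee hee hS hT hne hp) ?_
    · rw [Finset.card_erase_of_mem hx, (h3 T hT).1]
    · intro D hD hd
      refine ⟨huK D hd.1, (h.sub1 hD hS hv hd.2.2).subset, fun z hz => ?_⟩
      rw [Finset.mem_inter] at hz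
      exact Finset.mem_erase.2 ⟨fun hzx => hd.2.1 (hzx ▸ hz.1), hz.2⟩
  have b3 : cnt G A (fun D => u ∈ D ∧ x ∉ D ∧ v ∉ D) ≤ (j + 1) * (1 * (1 * 3 ^ r)) := by
    refine h.c2 (fun D => u ∈ D) hS hT hne {c} {d} hc.hx (by simp) (by simp)
      (pr3ee hee hS hT hne hp) ?_
    intro D hD hd
    have hxS : x ∉ S := fun hx' => Finset.disjoint_left.1 (h.disjP S hS T hT hne) hx' hx
    have hvT : v ∉ T := fun hv' => Finset.disjoint_left.1 (h.disjP S hS T hT hne) hv hv'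
    refine ⟨huK D hd.1, ?_, ?_⟩
    · exact (h.subc hD hS hv hcc (Iso_of_adj (MD_Ds hD) (h.S_sub S hS) hv
        (h.S_sub T hT hx) hxS hd.2.2 hd.2.1 hadj)).1.subset
    · exact (h.subc hD hT hx hdd (Iso_of_adj (MD_Ds hD) (h.S_sub T hT) hx
        (h.S_sub S hS hv) hvT hd.2.1 hd.2.2 hadj.symm)).1.subset
  have e1 : cnt G A (fun D => u ∈ D) ≤ cnt G A (fun D => u ∈ D ∧ x ∈ D) +
      cnt G A (fun D => u ∈ D ∧ x ∉ D) := cnt_or (fun D _ hd => by tauto)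
  have e2 : cnt G A (fun D => u ∈ D ∧ x ∉ D) ≤ cnt G A (fun D => u ∈ D ∧ x ∉ D ∧ v ∈ D) +
      cnt G A (fun D => u ∈ D ∧ x ∉ D ∧ v ∉ D) := cnt_or (fun D _ hd => by tauto)
  have : 3 ^ (r + 1) = 3 * 3 ^ r := pow_succ' 3 r
  rw [this] at b1
  generalize 3 ^ r = t at *
  linarith

end Core1

theorem pow3_ge (q : ℕ) : q + 1 ≤ 3 ^ q := by
  induction q with
  | zero => simp
  | succ q ih => rw [pow_succ]; omega

def bA (j q : ℕ) : ℕ := (3 * j + 2) * 3 ^ q + (j + 1) * (q + 2) + 1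
def bB (j q : ℕ) : ℕ := (j + 1) * 3 ^ (q + 1) + q + 2 * j + 2

theorem ar_step {j q m a : ℕ} (hj : 1 ≤ j) (hm : m ≤ max (bA j q) (bB j q))
    (ha : a ≤ 2 * ((3 * j + 2) * 3 ^ q) + (j + 1)) : m + a ≤ max (bA j (q + 1)) (bB j (q + 1)) := by
  have hq := pow3_ge q
  have hAq : bA j q + (2 * ((3 * j + 2) * 3 ^ q) + (j + 1)) = bA j (q + 1) := by
    unfold bA; rw [pow_succ]; ring
  rcases le_or_gt (bB j q) (bA j q) with h | h
  · rw [max_eq_left h] at hm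
    exact le_max_of_le_left (by omega)
  · by_cases hj2 : j ≤ 2 * 3 ^ q
    · rw [max_eq_right h.le] at hm
      apply le_max_of_le_right
      unfold bB at hm ⊢
      rw [pow_succ, pow_succ]
      rw [pow_succ] at hm
      generalize 3 ^ q = t at *
      linarith
    · exfalso
      unfold bA bB at h
      rw [pow_succ] at h
      rcases Nat.eq_zero_or_pos q with rfl | hq0
      · simp at hj2 h; omega
      · have h1 : j * 1 ≤ j * q := Nat.mul_le_mul_left j hq0
        generalize 3 ^ q = t at *
        push Not at hj2
        have : j * q + 1 ≤ t := by nlinarith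
        omega

theorem ar_new {j q m a : ℕ} (hj : 1 ≤ j) (hm : m ≤ max (bA j q) (bB j q))
    (ha : a ≤ (j + 1) * 3 ^ (q + 1)) : m + a ≤ (3 * j + 2) * 3 ^ (q + 1) + (j + 1) := by
  have hq := pow3_ge q
  rw [pow_succ] at ha ⊢
  have h1 : j * (q + 1) ≤ j * 3 ^ q := Nat.mul_le_mul_left j hq
  have h2 : 1 * (q + 1) ≤ j * (q + 1) := Nat.mul_le_mul_right _ hj
  rcases le_max_iff.1 hm with h | h
  · unfold bA at h
    generalize 3 ^ q = t at *
    nlinarith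
  · unfold bB at h
    rw [pow_succ] at h
    generalize 3 ^ q = t at *
    nlinarith

theorem m_inc3 {G : SimpleGraph V} {A S : Finset V} {x y : V} (h : Att G A S x y)
    (h3 : Sh3 G S) : (MD G (A ∪ S)).card ≤ (MD G A).card + 2 * cnt G A (fun D => y ∈ D)
      + cnt G A (fun D => Iso G A D y) := by
  have := inc3 h h3 (fun _ => True) (fun _ => True) (fun _ _ _ => trivial)
  simpa only [cnt_true, true_and] using this

namespace Core1

variable {G : SimpleGraph V} {K A : Finset V} {P : Finset (Finset V)} {u : V} {j : ℕ}

theorem V_new (hc : Core1 G K u j) (h : Bd G K A P) (h3 : ∀ S ∈ P, Sh3 G S)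
    {S : Finset V} {x y : V} (hA : Att G A S x y) (hS3 : Sh3 G S) {q : ℕ} (hq : P.card = q)
    (hm : ∀ r, P.card = r + 1 → (MD G A).card ≤ max (bA j r) (bB j r)) {v : V} (hv : v ∈ S) :
    cnt G (A ∪ S) (fun D => v ∈ D ∨ Iso G (A ∪ S) D v) ≤ (3 * j + 2) * 3 ^ q + (j + 1) := by
  refine (inc3_new hA hS3 hv).trans ?_
  have hx : cnt G A (fun D => y ∈ D) ≤ (j + 1) * 3 ^ q := by
    rcases h.mem_cases y hA.hy with hy | ⟨T, hT, hy⟩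
    · rw [hc.att_K h hA hy, ← hq]
      exact hc.xu h (pr3 h3)
    · obtain ⟨r, rfl⟩ : ∃ r, q = r + 1 := ⟨q - 1, by
        have := Finset.card_pos.2 ⟨T, hT⟩; omega⟩
      refine (hc.xv h hT hy (pr3e (fun U hU => h3 U (Finset.mem_of_mem_erase hU)) hT hq)).trans ?_
      rw [pow_succ]
      generalize 3 ^ r = t
      nlinarith
  rcases q with _ | r
  · have := h.eq_of_empty (Finset.card_eq_zero.1 hq)
    subst this
    have := hc.hm
    simp at hx ⊢
    omega
  · exact ar_new hc.hj (hm r hq) hx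

theorem V_old (hc : Core1 G K u j) (h : Bd G K A P) (h3 : ∀ S ∈ P, Sh3 G S)
    {S : Finset V} {x y : V} (hA : Att G A S x y) (hS3 : Sh3 G S) {q : ℕ} (hq : P.card = q + 1)
    {S0 : Finset V} (hS0 : S0 ∈ P) {v : V} (hv : v ∈ S0)
    (ih : cnt G A (fun D => v ∈ D ∨ Iso G A D v) ≤ (3 * j + 2) * 3 ^ q + (j + 1)) :
    cnt G (A ∪ S) (fun D => v ∈ D ∨ Iso G (A ∪ S) D v) ≤ (3 * j + 2) * 3 ^ (q + 1) + (j + 1) := by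
  have hj := hc.hj
  have hvA := h.S_sub S0 hS0 hv
  obtain ⟨c, hcS, hcc⟩ := Sh3_center (h3 S0 hS0)
  have he : ∀ T, ∀ U ∈ P.erase T, Sh3 G U := fun T U hU => h3 U (Finset.mem_of_mem_erase hU)
  have hee : ∀ S T, ∀ U ∈ (P.erase S).erase T, Sh3 G U := fun S T U hU =>
    h3 U (Finset.mem_of_mem_erase (Finset.mem_of_mem_erase hU))
  have hxv := hc.xv h hS0 hv (pr3e (he S0) hS0 hq)
  by_cases hyv : y = v
  · subst hyv
    rw [del_add_iso] at ih ⊢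
    have e1 : cnt G (A ∪ S) (fun D => y ∈ D) ≤ 3 * cnt G A (fun D => y ∈ D) := by
      have := inc3 hA hS3 (fun D => y ∈ D) (fun D => y ∈ D)
        (fun D _ hd => Finset.mem_inter.2 ⟨hd, hA.hy⟩)
      have z : cnt G A (fun D => y ∈ D ∧ Iso G A D y) = 0 := cnt_zero (fun D _ hd => hd.2.2.1 hd.1)
      rw [z] at this
      simp only [and_self] at this
      omega
    have e2 : cnt G (A ∪ S) (fun D => Iso G (A ∪ S) D y) ≤ cnt G A (fun D => Iso G A D y) := by
      refine att_fib hA _ _ x (fun D hD hd => ?_)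
      refine ⟨?_, Iso_restrict hd Finset.subset_union_left hA.hy⟩
      have hxD : x ∈ D := by
        by_contra hxD
        exact hd.2.2 x (Finset.mem_union_right _ hA.hx) hxD hA.adj.symm
      obtain ⟨s, _, hs⟩ := (att_step hA hD).2
      have : x ∈ D ∩ S := Finset.mem_inter.2 ⟨hxD, hA.hx⟩
      rw [hs, Finset.mem_singleton] at this
      rw [hs, this]
    rw [pow_succ]
    generalize 3 ^ q = t at *
    linarith
  · have key := inc3 hA hS3 (fun D => v ∈ D ∨ Iso G (A ∪ S) D v) (fun D => v ∈ D ∨ Iso G A D v)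
      (fun D _ hd => hd.imp (fun h' => Finset.mem_inter.2 ⟨h', hvA⟩)
        (fun h' => Iso_restrict h' Finset.subset_union_left hvA))
    have hS0sub : ∀ D ∈ MD G A, (v ∈ D ∨ Iso G A D v) → D ∩ S0 ⊆ {v, c} := by
      rintro D hD (hd | hd)
      · rw [h.sub1 hD hS0 hv hd]; simp
      · rw [(h.subcI hD hS0 hv hcc hd).1]; simp
    suffices hs : 2 * cnt G A (fun D => (v ∈ D ∨ Iso G A D v) ∧ y ∈ D)
      + cnt G A (fun D => (v ∈ D ∨ Iso G A D v) ∧ Iso G A D y) ≤ 2 * ((3 * j + 2) * 3 ^ q) by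
      rw [pow_succ]
      generalize 3 ^ q = t at *
      linarith
    rcases h.mem_cases y hA.hy with hy | ⟨T, hT, hy⟩
    · have hyu := hc.att_K h hA hy
      subst hyu
      have e1 : cnt G A (fun D => (v ∈ D ∨ Iso G A D v) ∧ y ∈ D) ≤ (j + 1) * (2 * 3 ^ q) :=
        h.c1 (fun D => y ∈ D) hS0 {v, c} hc.hx Finset.card_le_two (pr3e (he S0) hS0 hq)
          (fun D hD hd => ⟨Finset.mem_inter.2 ⟨hd.2, hy⟩, hS0sub D hD hd.1⟩)
      have e2 : cnt G A (fun D => (v ∈ D ∨ Iso G A D v) ∧ Iso G A D y) ≤ 1 * (2 * 3 ^ q) :=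
        h.c1 (fun D => Iso G K D y) hS0 {v, c} hc.hy Finset.card_le_two (pr3e (he S0) hS0 hq)
          (fun D hD hd => ⟨Iso_restrict hd.2 h.K_sub hy, hS0sub D hD hd.1⟩)
      generalize 3 ^ q = t at *
      nlinarith
    · by_cases hTS : S0 = T
      · subst hTS
        by_cases hyc : y = c
        · have e1 : cnt G A (fun D => (v ∈ D ∨ Iso G A D v) ∧ y ∈ D) ≤ (3 * j + 2) * 3 ^ q :=
            (cnt_mono (fun D _ hd => hd.2)).trans (hc.xv h hS0 hy (pr3e (he S0) hS0 hq))
          have e2 : cnt G A (fun D => (v ∈ D ∨ Iso G A D v) ∧ Iso G A D y) = 0 :=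
            cnt_zero (fun D hD hd => (h.subcI hD hS0 hy hcc hd.2).2 hyc)
          omega
        · have e1 : cnt G A (fun D => (v ∈ D ∨ Iso G A D v) ∧ y ∈ D) = 0 := by
            refine cnt_zero (fun D hD hd => ?_)
            have h1 := h.sub1 hD hS0 hy hd.2
            rcases hd.1 with h2 | h2
            · have h2 := h.sub1 hD hS0 hv h2
              rw [h1, Finset.singleton_inj] at h2
              exact hyv h2
            · have h2 := (h.subcI hD hS0 hv hcc h2).1
              rw [h1, Finset.singleton_inj] at h2
              exact hyc h2
          have e2 : cnt G A (fun D => (v ∈ D ∨ Iso G A D v) ∧ Iso G A D y) ≤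
              (3 * j + 2) * (1 * 3 ^ q) :=
            h.c1 (fun _ => True) hS0 {c} hc.hT (by simp) (pr3e (he S0) hS0 hq)
              (fun D hD hd => ⟨trivial, (h.subcI hD hS0 hy hcc hd.2).1.subset⟩)
          rw [one_mul] at e2
          omega
      · obtain ⟨r, rfl⟩ : ∃ r, q = r + 1 := ⟨q - 1, by
          have : 1 < P.card := Finset.one_lt_card.2 ⟨S0, hS0, T, hT, hTS⟩
          omega⟩
        obtain ⟨d, hdT, hdd⟩ := Sh3_center (h3 T hT)
        have e1 : cnt G A (fun D => (v ∈ D ∨ Iso G A D v) ∧ y ∈ D) ≤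
            (3 * j + 2) * (2 * (1 * 3 ^ r)) :=
          h.c2 (fun _ => True) hS0 hT hTS {v, c} {y} hc.hT Finset.card_le_two (by simp)
            (pr3ee (hee S0 T) hS0 hT hTS hq)
            (fun D hD hd => ⟨trivial, hS0sub D hD hd.1, (h.sub1 hD hT hy hd.2).subset⟩)
        have e2 : cnt G A (fun D => (v ∈ D ∨ Iso G A D v) ∧ Iso G A D y) ≤
            (3 * j + 2) * (2 * (1 * 3 ^ r)) :=
          h.c2 (fun _ => True) hS0 hT hTS {v, c} {d} hc.hT Finset.card_le_two (by simp)
            (pr3ee (hee S0 T) hS0 hT hTS hq)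
            (fun D hD hd => ⟨trivial, hS0sub D hD hd.1, (h.subcI hD hT hy hdd hd.2).1.subset⟩)
        rw [pow_succ]
        generalize 3 ^ r = t at *
        linarith

theorem item1 (hc : Core1 G K u j) (h : Bd G K A P) : (∀ S ∈ P, Sh3 G S) →
    ((∀ S ∈ P, ∃ x ∈ S, G.Adj x u) → (MD G A).card ≤ (j + 1) * 3 ^ P.card + P.card + 2 * j + 1) ∧
    (∀ q, P.card = q + 1 → (MD G A).card ≤ max (bA j q) (bB j q)) ∧
    (∀ q, P.card = q + 1 → ∀ S ∈ P, ∀ v ∈ S,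
      cnt G A (fun D => v ∈ D ∨ Iso G A D v) ≤ (3 * j + 2) * 3 ^ q + (j + 1)) := by
  have hj := hc.hj
  induction h with
  | base =>
    intro _
    refine ⟨fun _ => ?_, fun q hq => ?_, fun q hq => ?_⟩
    · have := hc.hm
      simp
      omega
    · simp at hq
    · simp at hq
  | @step A P S x y hb hA hs ih =>
    intro h3
    have h3P : ∀ S ∈ P, Sh3 G S := fun T hT => h3 T (Finset.mem_insert_of_mem hT)
    have h3S : Sh3 G S := h3 S (Finset.mem_insert_self _ _)
    obtain ⟨ih1, ih2, ih3⟩ := ih h3P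
    have hcard : (insert S P).card = P.card + 1 := Finset.card_insert_of_notMem (hb.notin hA)
    have he : ∀ T, ∀ U ∈ P.erase T, Sh3 G U := fun T U hU => h3P U (Finset.mem_of_mem_erase hU)
    have hinc := m_inc3 hA h3S
    have part1 : (∀ T ∈ insert S P, ∃ x ∈ T, G.Adj x u) →
        (MD G (A ∪ S)).card ≤ (j + 1) * 3 ^ (P.card + 1) + (P.card + 1) + 2 * j + 1 := by
      intro hst
      have hstP : ∀ T ∈ P, ∃ x ∈ T, G.Adj x u := fun T hT => hst T (Finset.mem_insert_of_mem hT)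
      obtain ⟨x', hx', hadj⟩ := hst S (Finset.mem_insert_self _ _)
      have hyu : u = y := (hA.edge u (hb.K_sub hc.huK) x' hx' hadj.symm).1
      subst hyu
      have a1 := ih1 hstP
      have a2 := hc.xu hb (pr3 h3P)
      have a3 := hc.yu_star hb hstP
      rw [pow_succ]
      generalize 3 ^ P.card = t at *
      linarith
    rw [hcard]
    refine ⟨part1, ?_, ?_⟩
    · intro q hq
      obtain rfl : P.card = q := by omega
      by_cases hst : ∀ T ∈ insert S P, ∃ x ∈ T, G.Adj x u
      · have := part1 hst
        refine le_max_of_le_right ?_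
        unfold bB
        omega
      · have hPne : P.Nonempty := by
          rw [Finset.nonempty_iff_ne_empty]
          intro hP
          subst hP
          have hAK := hb.eq_of_empty rfl
          apply hst
          intro T hT
          obtain rfl : T = S := by simpa using hT
          have := hc.att_K hb hA (hAK ▸ hA.hy)
          exact ⟨x, hA.hx, this ▸ hA.adj⟩
        obtain ⟨q, hq⟩ : ∃ q, P.card = q + 1 := ⟨P.card - 1, by
          have := Finset.card_pos.2 hPne; omega⟩
        rw [hq]
        suffices hs : 2 * cnt G A (fun D => y ∈ D) + cnt G A (fun D => Iso G A D y) ≤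
            2 * ((3 * j + 2) * 3 ^ q) + (j + 1) by
          have := ar_step hj (ih2 q hq) hs
          omega
        rcases hb.mem_cases y hA.hy with hy | ⟨T, hT, hy⟩
        · have hyu := hc.att_K hb hA hy
          subst hyu
          have hst' : ¬ ∀ T ∈ P, ∃ x ∈ T, G.Adj x y := by
            intro hst'
            apply hst
            intro T hT
            rcases Finset.mem_insert.1 hT with rfl | hT
            · exact ⟨x, hA.hx, hA.adj⟩
            · exact hst' T hT
          obtain ⟨U, hU, x', hx', hadj⟩ := hb.exists_root hc.hu hPne
          obtain ⟨r, rfl⟩ : ∃ r, q = r + 1 := ⟨q - 1, by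
            obtain ⟨S1, hS1, S2, hS2, hne, _⟩ := hb.nonstar_pair hc.hu hst'
            have : 1 < P.card := Finset.one_lt_card.2 ⟨S1, hS1, S2, hS2, hne⟩
            omega⟩
          have a1 := hc.xu_nonstar hb h3P hq hst'
          have a2 := hc.yu hb hU hx' hadj (pr3e (he U) hU hq)
          rw [pow_succ] at a2 ⊢
          generalize 3 ^ r = t at *
          nlinarith
        · have a1 := hc.xv hb hT hy (pr3e (he T) hT hq)
          have a2 := ih3 q hq T hT y hy
          rw [del_add_iso] at a2
          omega
    · intro q hq T hT v hv
      obtain rfl : P.card = q := by omega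
      rcases Finset.mem_insert.1 hT with rfl | hT
      · exact hc.V_new hb h3P hA h3S rfl ih2 hv
      · obtain ⟨q, hq⟩ : ∃ q, P.card = q + 1 := ⟨P.card - 1, by
          have := Finset.card_pos.2 ⟨T, hT⟩; omega⟩
        rw [hq]
        exact hc.V_old hb h3P hA h3S hq hT hv (ih3 q hq T hT v hv)

end Core1

theorem Bd.exists_root' {G : SimpleGraph V} {K A : Finset V} {P : Finset (Finset V)}
    (h : Bd G K A P) {u : V}
    (hu : ∀ y ∈ K, ∀ x, x ∉ K → G.Adj x y → y = u) (hP : P.Nonempty) :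
    ∃ S ∈ P, ∃ x ∈ opt G S, G.Adj x u := by
  induction h with
  | base => simp at hP
  | @step A P S x y hb hA hs ih =>
    by_cases hP' : P.Nonempty
    · obtain ⟨T, hT, h'⟩ := ih hP'
      exact ⟨T, Finset.mem_insert_of_mem hT, h'⟩
    · have := hb.eq_of_empty (Finset.not_nonempty_iff_eq_empty.1 hP')
      subst this
      have hy := hu y hA.hy x (fun hx => Finset.disjoint_left.1 hA.disj hx hA.hx) hA.adj
      exact ⟨S, Finset.mem_insert_self _ _, x, att_x_opt hA, hy ▸ hA.adj⟩

namespace Core1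

variable {G : SimpleGraph V} {K A : Finset V} {P : Finset (Finset V)} {u : V} {j : ℕ}

theorem item2 (hc : Core1 G K u j) (h : Bd G K A P) : ∀ S4 ∈ P, Sh4 G S4 →
    (∀ S ∈ P, S ≠ S4 → Sh3 G S) → ∀ q, P.card = q + 1 →
    (MD G A).card ≤ max ((3 * j + 2) * 3 ^ q + (j + 1)) ((j + 1) * 3 ^ (q + 1) + 1) := by
  have hj := hc.hj
  induction h with
  | base => simp
  | @step A P S x y hb hA hs ih =>
    intro S4 hS4 h4 h3 q hq
    have hcard : (insert S P).card = P.card + 1 := Finset.card_insert_of_notMem (hb.notin hA)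
    obtain rfl : P.card = q := by omega
    by_cases hSS : S = S4
    · subst hSS
      have h3P : ∀ T ∈ P, Sh3 G T := fun T hT => h3 T (Finset.mem_insert_of_mem hT)
        (fun hh => hb.notin hA (hh ▸ hT))
      have hm := inc4 hA h4
      have he : ∀ T, ∀ U ∈ P.erase T, Sh3 G U := fun T U hU => h3P U (Finset.mem_of_mem_erase hU)
      have hx : cnt G A (fun D => y ∈ D) ≤ (j + 1) * 3 ^ P.card := by
        rcases hb.mem_cases y hA.hy with hy | ⟨T, hT, hy⟩
        · rw [hc.att_K hb hA hy]
          exact hc.xu hb (pr3 h3P)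
        · obtain ⟨r, hr⟩ : ∃ r, P.card = r + 1 := ⟨P.card - 1, by
            have := Finset.card_pos.2 ⟨T, hT⟩; omega⟩
          refine (hc.xv hb hT hy (pr3e (he T) hT hr)).trans ?_
          rw [hr, pow_succ]
          generalize 3 ^ r = t
          nlinarith
      refine le_max_of_le_left (hm.trans ?_)
      rcases hP : P.card with _ | r
      · have := hb.eq_of_empty (Finset.card_eq_zero.1 hP)
        subst this
        have := hc.hm
        rw [hP] at hx
        simp at hx ⊢
        omega
      · rw [hP] at hx
        exact ar_new hj ((hc.item1 hb h3P).2.1 r hP) hx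
    · have hS4P : S4 ∈ P := (Finset.mem_insert.1 hS4).resolve_left (Ne.symm hSS)
      have h3P : ∀ T ∈ P, T ≠ S4 → Sh3 G T := fun T hT => h3 T (Finset.mem_insert_of_mem hT)
      obtain ⟨r, hr⟩ : ∃ r, P.card = r + 1 := ⟨P.card - 1, by
        have := Finset.card_pos.2 ⟨S4, hS4P⟩; omega⟩
      have ih' := ih S4 hS4P h4 h3P r hr
      have hinc := m_inc3 hA (h3 S (Finset.mem_insert_self _ _) hSS)
      have he4 : ∀ U ∈ P.erase S4, Sh3 G U := fun U hU =>
        h3P U (Finset.mem_of_mem_erase hU) (Finset.ne_of_mem_erase hU)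
      have hpr4 := pr3e he4 hS4P hr
      have hprA : ∏ S ∈ P, (opt G S).card ≤ 2 * 3 ^ r := by
        rw [← Finset.mul_prod_erase _ _ hS4P]
        exact Nat.mul_le_mul h4.2.1 hpr4
      suffices hs : 2 * cnt G A (fun D => y ∈ D) + cnt G A (fun D => Iso G A D y) ≤
          2 * ((3 * j + 2) * 3 ^ r) by
        rw [hr]
        simp only [pow_succ] at ih' ⊢
        generalize 3 ^ r = t at *
        rcases le_max_iff.1 ih' with h' | h'
        · exact le_max_of_le_left (by linarith)
        · exact le_max_of_le_right (by linarith)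
      rcases hb.mem_cases y hA.hy with hy | ⟨T, hT, hy⟩
      · have hyu := hc.att_K hb hA hy
        subst hyu
        have a1 := hc.xu hb hprA
        have a2 : cnt G A (fun D => Iso G A D y) ≤ 1 * (2 * 3 ^ r) :=
          hb.c0 (fun D => Iso G K D y) hc.hy hprA (fun D _ hd => Iso_restrict hd hb.K_sub hy)
        generalize 3 ^ r = t at *
        nlinarith
      · by_cases hT4 : T = S4
        · subst hT4
          by_cases hyo : y ∈ opt G T
          · have a1 := hc.xv hb hT hy hpr4
            have a2 : cnt G A (fun D => Iso G A D y) = 0 := cnt_zero (fun D hD hd => by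
              obtain ⟨s, hs1, hs2⟩ := hb.memS D hD T hT
              have := Iso_restrict hd (hb.S_sub T hT) hy
              rw [hs2] at this
              exact (h4.2.2 y hy).1 hyo s hs1 this)
            omega
          · have a1 : cnt G A (fun D => y ∈ D) = 0 := cnt_zero (fun D hD hd => by
              obtain ⟨s, hs1, hs2⟩ := hb.memS D hD T hT
              have := hb.sub1 hD hT hy hd
              rw [hs2, Finset.singleton_inj] at this
              exact hyo (this ▸ hs1))
            have a2 : cnt G A (fun D => Iso G A D y) ≤ (3 * j + 2) * (1 * 3 ^ r) :=
              hb.c1 (fun _ => True) hT ((opt G T).filter (fun s => Iso G T {s} y)) hc.hT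
                ((h4.2.2 y hy).2) hpr4 (fun D hD hd => ⟨trivial, by
                  obtain ⟨s, hs1, hs2⟩ := hb.memS D hD T hT
                  have := Iso_restrict hd (hb.S_sub T hT) hy
                  rw [hs2] at this ⊢
                  intro z hz
                  rw [Finset.mem_singleton] at hz
                  subst hz
                  exact Finset.mem_filter.2 ⟨hs1, this⟩⟩)
            rw [one_mul] at a2
            omega
        · obtain ⟨s, rfl⟩ : ∃ s, r = s + 1 := ⟨r - 1, by
            have : 1 < P.card := Finset.one_lt_card.2 ⟨T, hT, S4, hS4P, hT4⟩
            omega⟩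
          obtain ⟨d, hdT, hdd⟩ := Sh3_center (h3P T hT hT4)
          have hprT : ∏ S ∈ P.erase T, (opt G S).card ≤ 2 * 3 ^ s := by
            rw [← Finset.mul_prod_erase _ _ (Finset.mem_erase.2 ⟨Ne.symm hT4, hS4P⟩)]
            refine Nat.mul_le_mul h4.2.1 (pr3ee (fun U hU => ?_) hT hS4P hT4 hr)
            exact h3P U (Finset.mem_of_mem_erase (Finset.mem_of_mem_erase hU))
              (Finset.ne_of_mem_erase hU)
          have a1 := hc.xv hb hT hy hprT
          have a2 : cnt G A (fun D => Iso G A D y) ≤ (3 * j + 2) * (1 * (2 * 3 ^ s)) :=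
            hb.c1 (fun _ => True) hT {d} hc.hT (by simp) hprT
              (fun D hD hd => ⟨trivial, (hb.subcI hD hT hy hdd hd).1.subset⟩)
          rw [pow_succ]
          generalize 3 ^ s = t at *
          linarith

theorem item4 (hc : Core1 G K u j) (h : Bd G K A P) {S : Finset V} (hS : S ∈ P) {x : V}
    (hx : x ∈ opt G S) (hadj : G.Adj x u) {o w : ℕ} (ho : (opt G S).card ≤ o + 1)
    (hw : ∏ T ∈ P.erase S, (opt G T).card ≤ w) :
    (MD G A).card ≤ (3 * j + 2) * w + (j + 2) * (o * w) := by
  have hxS := opt_sub G S hx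
  have a1 := hc.xv h hS hxS hw
  have hxy : cnt G K (fun D => u ∈ D ∨ Iso G K D u) ≤ j + 2 := by
    rw [del_add_iso]
    have := hc.hx
    have := hc.hy
    omega
  have a2 : cnt G A (fun D => x ∉ D) ≤ (j + 2) * (o * w) := by
    refine h.c1 (fun D => u ∈ D ∨ Iso G K D u) hS ((opt G S).erase x) hxy ?_ hw ?_
    · rw [Finset.card_erase_of_mem hx]; omega
    · intro D hD hd
      constructor
      · by_cases hu : u ∈ D
        · exact Or.inl (Finset.mem_inter.2 ⟨hu, hc.huK⟩)
        · exact Or.inr (Iso_of_adj (MD_Ds hD) h.K_sub hc.huK (h.S_sub S hS hxS)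
            (h.not_mem_K hS hxS) hu hd hadj.symm)
      · obtain ⟨s, hs1, hs2⟩ := h.memS D hD S hS
        rw [hs2]
        intro z hz
        rw [Finset.mem_singleton] at hz
        subst hz
        refine Finset.mem_erase.2 ⟨?_, hs1⟩
        rintro rfl
        have : z ∈ D ∩ S := by rw [hs2]; simp
        exact hd (Finset.mem_inter.1 this).1
  have := cnt_or (G := G) (A := A) (Φ := fun _ => True) (Ψ := fun D => x ∈ D) (Ξ := fun D => x ∉ D)
    (fun D _ _ => em _)
  rw [cnt_true] at this
  omega

end Core1

/-- data on the core of type 2 -/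
structure Core2 (G : SimpleGraph V) (K : Finset V) (u l : V) (j : ℕ) : Prop where
  hj : 1 ≤ j
  huK : u ∈ K
  hlK : l ∈ K
  hu : ∀ y ∈ K, ∀ x, x ∉ K → G.Adj x y → y = u ∨ y = l
  hm : (MD G K).card ≤ j + 2
  hx : cnt G K (fun D => u ∈ D) ≤ j + 1
  hy : ∀ D ∈ MD G K, ¬ Iso G K D u
  hlx : ∀ D ∈ MD G K, l ∉ D
  hly : ∀ D ∈ MD G K, Iso G K D l → u ∈ D

theorem Core2.item3 {G : SimpleGraph V} {K A : Finset V} {P : Finset (Finset V)} {u l : V} {j : ℕ}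
    (hc : Core2 G K u l j) (h : Bd G K A P) : (∀ S ∈ P, Sh3 G S) →
    (MD G A).card ≤ (j + 1) * 3 ^ P.card + 1 := by
  have hj := hc.hj
  have hT : cnt G K (fun _ => True) ≤ j + 2 := by rw [cnt_true]; exact hc.hm
  induction h with
  | base =>
    intro _
    have := hc.hm
    simpa using this
  | @step A P S x y hb hA hs ih =>
    intro h3
    have h3P : ∀ S ∈ P, Sh3 G S := fun T hT => h3 T (Finset.mem_insert_of_mem hT)
    have h3S : Sh3 G S := h3 S (Finset.mem_insert_self _ _)
    have ih := ih h3P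
    have hinc := m_inc3 hA h3S
    rw [Finset.card_insert_of_notMem (hb.notin hA), pow_succ]
    suffices hs : 2 * cnt G A (fun D => y ∈ D) + cnt G A (fun D => Iso G A D y) ≤
        2 * ((j + 1) * 3 ^ P.card) by
      generalize 3 ^ P.card = t at *
      linarith
    rcases hb.mem_cases y hA.hy with hy | ⟨T, hT', hy⟩
    · rcases hc.hu y hy x (fun hx => Finset.disjoint_left.1 hA.disj (hb.K_sub hx) hA.hx) hA.adj
        with rfl | rfl
      · have a1 : cnt G A (fun D => y ∈ D) ≤ (j + 1) * 3 ^ P.card :=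
          hb.c0 (fun D => y ∈ D) hc.hx (pr3 h3P) (fun D hD hd => Finset.mem_inter.2 ⟨hd, hy⟩)
        have a2 : cnt G A (fun D => Iso G A D y) = 0 := cnt_zero (fun D hD hd =>
          hc.hy _ (hb.memK D hD) (Iso_restrict hd hb.K_sub hy))
        omega
      · have a1 : cnt G A (fun D => y ∈ D) = 0 := cnt_zero (fun D hD hd =>
          hc.hlx _ (hb.memK D hD) (Finset.mem_inter.2 ⟨hd, hy⟩))
        have a2 : cnt G A (fun D => Iso G A D y) ≤ (j + 1) * 3 ^ P.card :=
          hb.c0 (fun D => u ∈ D) hc.hx (pr3 h3P) (fun D hD hd =>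
            hc.hly _ (hb.memK D hD) (Iso_restrict hd hb.K_sub hy))
        omega
    · obtain ⟨r, hr⟩ : ∃ r, P.card = r + 1 := ⟨P.card - 1, by
        have := Finset.card_pos.2 ⟨T, hT'⟩; omega⟩
      obtain ⟨d, hdT, hdd⟩ := Sh3_center (h3P T hT')
      have hpr := pr3e (fun U hU => h3P U (Finset.mem_of_mem_erase hU)) hT' hr
      have a1 : cnt G A (fun D => y ∈ D) ≤ (j + 2) * (1 * 3 ^ r) :=
        hb.c1 (fun _ => True) hT' {y} hT (by simp) hpr
          (fun D hD hd => ⟨trivial, (hb.sub1 hD hT' hy hd).subset⟩)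
      have a2 : cnt G A (fun D => Iso G A D y) ≤ (j + 2) * (1 * 3 ^ r) :=
        hb.c1 (fun _ => True) hT' {d} hT (by simp) hpr
          (fun D hD hd => ⟨trivial, (hb.subcI hD hT' hy hdd hd).1.subset⟩)
      rw [hr, pow_succ]
      generalize 3 ^ r = t at *
      nlinarith

theorem pcount {G : SimpleGraph V} (P : Finset (Finset V)) :
    (∀ S ∈ P, Sh3 G S ∨ Sh4 G S ∨ Sh5 G S) → ∃ a b e, a = (P.filter (fun S => S.card = 3)).card ∧
    b = (P.filter (fun S => S.card = 4)).card ∧ e = (P.filter (fun S => 5 ≤ S.card)).card ∧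
    P.card = a + b + e ∧ 3 * a + 4 * b + 5 * e ≤ ∑ S ∈ P, S.card ∧
    (e = 0 → ∑ S ∈ P, S.card = 3 * a + 4 * b) ∧ ∏ S ∈ P, (opt G S).card ≤ 3 ^ a * 2 ^ b := by
  induction P using Finset.induction_on with
  | empty => intro _; exact ⟨0, 0, 0, by simp⟩
  | insert S P hS ih =>
    intro h
    obtain ⟨a, b, e, ha, hb, he, h1, h2, h3, h4⟩ := ih (fun T hT => h T (Finset.mem_insert_of_mem hT))
    rw [Finset.card_insert_of_notMem hS, Finset.sum_insert hS, Finset.prod_insert hS,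
      Finset.filter_insert, Finset.filter_insert, Finset.filter_insert]
    rcases h S (Finset.mem_insert_self _ _) with hs | hs | hs
    · have hc := hs.1
      refine ⟨a + 1, b, e, ?_, ?_, ?_, by omega, by omega, by omega, ?_⟩
      · rw [if_pos hc, Finset.card_insert_of_notMem (by simp [hS]), ha]
      · rw [if_neg (by omega), hb]
      · rw [if_neg (by omega), he]
      · calc _ ≤ 3 * (3 ^ a * 2 ^ b) := Nat.mul_le_mul (opt3 hs) h4
          _ = _ := by ring
    · have hc := hs.1
      refine ⟨a, b + 1, e, ?_, ?_, ?_, by omega, by omega, by omega, ?_⟩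
      · rw [if_neg (by omega), ha]
      · rw [if_pos hc, Finset.card_insert_of_notMem (by simp [hS]), hb]
      · rw [if_neg (by omega), he]
      · calc _ ≤ 2 * (3 ^ a * 2 ^ b) := Nat.mul_le_mul hs.2.1 h4
          _ = _ := by ring
    · have hc := hs.1
      refine ⟨a, b, e + 1, ?_, ?_, ?_, by omega, by omega, by omega, ?_⟩
      · rw [if_neg (by omega), ha]
      · rw [if_neg (by omega), hb]
      · rw [if_pos hc, Finset.card_insert_of_notMem (by simp [hS]), he]
      · calc _ ≤ 1 * (3 ^ a * 2 ^ b) := Nat.mul_le_mul hs.2 h4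
          _ = _ := by ring

def Tgt (j N m : ℕ) : Prop :=
  (∀ q, N = 3 * (q + 1) → m ≤ max (bA j q) (bB j q)) ∧
  (∀ q, N = 3 * (q + 1) + 1 → m ≤ max ((3 * j + 2) * 3 ^ q + (j + 1)) ((j + 1) * 3 ^ (q + 1) + 1)) ∧
  (∀ q, N = 3 * (q + 1) + 2 → m ≤ (j + 1) * 3 ^ (q + 1))

theorem pow_le_aux {a b q : ℕ} (h : a + b ≤ q) : 3 ^ a * 2 ^ b ≤ 3 ^ q := by
  calc 3 ^ a * 2 ^ b ≤ 3 ^ a * 3 ^ b := Nat.mul_le_mul_left _ (Nat.pow_le_pow_left (by norm_num) b)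
    _ = 3 ^ (a + b) := (pow_add _ _ _).symm
    _ ≤ 3 ^ q := Nat.pow_le_pow_right (by norm_num) h

theorem le_bA {j q M w m : ℕ} (hM : M ≤ 3 * j + 2) (hw : w ≤ 3 ^ q) (hm : m ≤ M * w) :
    m ≤ max (bA j q) (bB j q) := by
  apply le_max_of_le_left
  have := hm.trans (Nat.mul_le_mul hM hw)
  unfold bA
  omega

theorem le_b2 {j q M w m : ℕ} (hM : M ≤ 3 * j + 2) (hw : w ≤ 3 ^ q) (hm : m ≤ M * w) :
    m ≤ max ((3 * j + 2) * 3 ^ q + (j + 1)) ((j + 1) * 3 ^ (q + 1) + 1) := by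
  apply le_max_of_le_left
  have := hm.trans (Nat.mul_le_mul hM hw)
  omega

theorem le_b3 {j q M w m : ℕ} (hM : M ≤ 3 * j + 3) (hw : w ≤ 3 ^ q) (hm : m ≤ M * w) :
    m ≤ (j + 1) * 3 ^ (q + 1) := by
  have := hm.trans (Nat.mul_le_mul hM hw)
  rw [pow_succ]
  linarith

theorem m_le {G : SimpleGraph V} {K A : Finset V} {P : Finset (Finset V)} (h : Bd G K A P) {M w : ℕ}
    (hM : (MD G K).card ≤ M) (hw : ∏ S ∈ P, (opt G S).card ≤ w) : (MD G A).card ≤ M * w := by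
  rw [← cnt_true] at hM ⊢
  exact h.c0 (fun _ => True) hM hw (fun _ _ _ => trivial)

theorem all3 {G : SimpleGraph V} {P : Finset (Finset V)}
    (hsh : ∀ S ∈ P, Sh3 G S ∨ Sh4 G S ∨ Sh5 G S)
    (h4 : (P.filter (fun S => S.card = 4)).card = 0)
    (h5 : (P.filter (fun S => 5 ≤ S.card)).card = 0) : ∀ S ∈ P, Sh3 G S := by
  intro S hS
  rw [Finset.card_eq_zero, Finset.filter_eq_empty_iff] at h4 h5
  rcases hsh S hS with h | h | h
  · exact h
  · exact absurd h.1 (h4 hS)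
  · exact absurd h.1 (h5 hS)

theorem fin3 {G : SimpleGraph V} {K A : Finset V} {P : Finset (Finset V)} {j N : ℕ}
    (h : Bd G K A P) (hm : (MD G K).card ≤ j + 1) (hN : ∑ S ∈ P, S.card + 2 ≤ N) :
    Tgt j N (MD G A).card := by
  obtain ⟨a, b, e, ha, hb, he, h1, h2, h3, h4⟩ := pcount P h.shape
  have hle := m_le h hm h4
  refine ⟨fun q hq => ?_, fun q hq => ?_, fun q hq => ?_⟩
  · exact le_bA (by omega) (pow_le_aux (by omega)) hle
  · exact le_b2 (by omega) (pow_le_aux (by omega)) hle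
  · exact hle.trans (Nat.mul_le_mul_left _ (pow_le_aux (by omega)))

theorem fin2 {G : SimpleGraph V} {K A : Finset V} {P : Finset (Finset V)} {u l : V} {j N : ℕ}
    (hc : Core2 G K u l j) (h : Bd G K A P) (hN : ∑ S ∈ P, S.card + 1 = N) :
    Tgt j N (MD G A).card := by
  have hj := hc.hj
  obtain ⟨a, b, e, ha, hb, he, h1, h2, h3, h4⟩ := pcount P h.shape
  have hle := m_le h hc.hm h4
  refine ⟨fun q hq => ?_, fun q hq => ?_, fun q hq => ?_⟩
  · exact le_bA (by omega) (pow_le_aux (by omega)) hle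
  · by_cases hbe : b = 0 ∧ e = 0
    · have := hc.item3 h (all3 h.shape (by omega) (by omega))
      rw [h1, show a + b + e = q + 1 by omega] at this
      exact le_max_of_le_right this
    · exact le_b2 (by omega) (pow_le_aux (by omega)) hle
  · by_cases hbe : b = 1 ∧ e = 0
    · obtain ⟨rfl, rfl⟩ := hbe
      obtain rfl : a = q := by omega
      rw [pow_succ]
      generalize 3 ^ a = t at *
      nlinarith
    · exact le_b3 (by omega) (pow_le_aux (by omega)) hle

theorem fin1 {G : SimpleGraph V} {K A : Finset V} {P : Finset (Finset V)} {u : V} {j N : ℕ}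
    (hc : Core1 G K u j) (h : Bd G K A P) (hN : ∑ S ∈ P, S.card = N) :
    Tgt j N (MD G A).card := by
  have hj := hc.hj
  obtain ⟨a, b, e, ha, hb, he, h1, h2, h3, h4⟩ := pcount P h.shape
  have hle := m_le h hc.hm h4
  refine ⟨fun q hq => ?_, fun q hq => ?_, fun q hq => ?_⟩
  · by_cases hbe : b = 0 ∧ e = 0
    · exact (hc.item1 h (all3 h.shape (by omega) (by omega))).2.1 q (by omega)
    · exact le_bA (by omega) (pow_le_aux (by omega)) hle
  · by_cases hbe : b = 1 ∧ e = 0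
    · obtain ⟨rfl, rfl⟩ := hbe
      obtain ⟨S4, hS4⟩ := Finset.card_eq_one.1 hb.symm
      have hm4 : ∀ S, S ∈ P ∧ S.card = 4 ↔ S = S4 := by
        intro S
        have := Finset.ext_iff.1 hS4 S
        simpa only [Finset.mem_filter, Finset.mem_singleton] using this
      have h5 := he.symm
      rw [Finset.card_eq_zero, Finset.filter_eq_empty_iff] at h5
      obtain ⟨hP, hc4⟩ := (hm4 S4).2 rfl
      refine hc.item2 h S4 hP ?_ ?_ q (by omega)
      · rcases h.shape S4 hP with h' | h' | h'
        · have := h'.1; omega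
        · exact h'
        · exact absurd h'.1 (h5 hP)
      · intro S hS hne
        rcases h.shape S hS with h' | h' | h'
        · exact h'
        · exact absurd ((hm4 S).1 ⟨hS, h'.1⟩) hne
        · exact absurd h'.1 (h5 hS)
    · exact le_b2 (by omega) (pow_le_aux (by omega)) hle
  · by_cases hbe : b = 2 ∧ e = 0
    · obtain ⟨rfl, rfl⟩ := hbe
      have hPne : P.Nonempty := Finset.card_pos.1 (by omega)
      obtain ⟨S, hS, x, hx, hadj⟩ := h.exists_root' hc.hu hPne
      obtain ⟨a', b', e', ha', hb', he', h1', h2', h3', h4'⟩ := pcount (P.erase S)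
        (fun T hT => h.shape T (Finset.mem_of_mem_erase hT))
      have hcard : (P.erase S).card = P.card - 1 := Finset.card_erase_of_mem hS
      have hsum := Finset.add_sum_erase P Finset.card hS
      have he0 : e' = 0 := by
        have : e' ≤ 0 := by
          rw [he', he]
          exact Finset.card_le_card (Finset.filter_subset_filter _ (Finset.erase_subset _ _))
        omega
      have hsum' := h3' he0
      rcases h.shape S hS with hs | hs | hs
      · have e1 : b' = 2 := by have := hs.1; omega
        have e2 : a = a' + 1 := by omega
        obtain rfl : a' + 2 = q := by have := hs.1; omega
        have := hc.item4 h hS hx hadj (o := 2) (opt3 hs) h4'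
        subst e1
        rw [pow_succ, pow_succ, pow_succ]
        generalize 3 ^ a' = t at *
        nlinarith
      · have e1 : b' = 1 := by have := hs.1; omega
        obtain rfl : a' + 1 = q := by have := hs.1; omega
        have := hc.item4 h hS hx hadj (o := 1) hs.2.1 h4'
        subst e1
        rw [pow_succ, pow_succ]
        generalize 3 ^ a' = t at *
        nlinarith
      · exfalso
        have h5 := he.symm
        rw [Finset.card_eq_zero, Finset.filter_eq_empty_iff] at h5
        exact h5 hS hs.1
    · exact le_b3 (by omega) (pow_le_aux (by omega)) hle

structure Pot (G : SimpleGraph V) (C : Finset V) (u : V) (par : V → V) (d : V → ℕ) : Prop where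
  huC : u ∈ C
  adj : ∀ v, v ∉ C → G.Adj v (par v)
  dep : ∀ v, v ∉ C → d (par v) < d v
  edge : ∀ a b, G.Adj a b → (a ∈ C ∧ b ∈ C) ∨ (a ∉ C ∧ b = par a) ∨ (b ∉ C ∧ a = par b)
  parC : ∀ v, v ∉ C → par v ∈ C → par v = u

/-- `a` is a child of `x` in `A` -/
def Kid (C : Finset V) (par : V → V) (A : Finset V) (x a : V) : Prop := a ∈ A ∧ a ∉ C ∧ par a = x

def Big (C : Finset V) (par : V → V) (A : Finset V) (x : V) : Prop :=
  x ∈ A ∧ x ∉ C ∧ ((∃ a b, Kid C par A x a ∧ Kid C par A x b ∧ a ≠ b) ∨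
    ∃ a g, Kid C par A x a ∧ Kid C par A a g)

noncomputable def Cl (C : Finset V) (par : V → V) (A : Finset V) (x : V) : Finset V :=
  A.filter (fun z => z = x ∨ Kid C par A x z ∨ ∃ a, Kid C par A x a ∧ Kid C par A a z)

theorem card_le_of_sub3 {S : Finset V} {a b c : V} (h : ∀ z ∈ S, z = a ∨ z = b ∨ z = c) :
    S.card ≤ 3 := by
  refine (Finset.card_le_card (t := {a, b, c}) ?_).trans Finset.card_le_three
  intro z hz
  simpa using h z hz

namespace Pot

variable {G : SimpleGraph V} {C A : Finset V} {u : V} {par : V → V} {d : V → ℕ}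

theorem kd (hp : Pot G C u par d) {x a : V} (h : Kid C par A x a) : d x < d a := by
  have := hp.dep a h.2.1
  rwa [h.2.2] at this

theorem kadj (hp : Pot G C u par d) {x a : V} (h : Kid C par A x a) : G.Adj a x := by
  have := hp.adj a h.2.1
  rwa [h.2.2] at this

theorem mem_Cl {x z : V} (hx : x ∈ A) : z ∈ Cl C par A x ↔
    z = x ∨ Kid C par A x z ∨ ∃ a, Kid C par A x a ∧ Kid C par A a z := by
  unfold Cl
  rw [Finset.mem_filter]
  constructor
  · exact fun h => h.2
  · rintro h
    refine ⟨?_, h⟩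
    rcases h with rfl | h | ⟨a, _, h⟩
    · exact hx
    · exact h.1
    · exact h.1

/-- hypotheses for a lowest big vertex -/
structure Low (C : Finset V) (par : V → V) (A : Finset V) (x : V) : Prop where
  big : Big C par A x
  uniq : ∀ a, Kid C par A x a → ∀ b c, Kid C par A a b → Kid C par A a c → b = c
  none : ∀ a, Kid C par A x a → ∀ b, Kid C par A a b → ∀ c, ¬ Kid C par A b c

theorem low_of_max (hp : Pot G C u par d) {x : V} (hx : Big C par A x)
    (hmax : ∀ y, Big C par A y → d y ≤ d x) : Low C par A x where
  big := hx
  uniq a ha b c hb hc := by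
    by_contra hbc
    have := hmax a ⟨ha.1, ha.2.1, Or.inl ⟨b, c, hb, hc, hbc⟩⟩
    have := hp.kd ha
    omega
  none a ha b hb c hc := by
    have := hmax a ⟨ha.1, ha.2.1, Or.inr ⟨b, c, hb, hc⟩⟩
    have := hp.kd ha
    omega

theorem Cl_notC {x : V} (hx : x ∈ A) (hxC : x ∉ C) : ∀ z ∈ Cl C par A x, z ∉ C := by
  intro z hz
  rcases (mem_Cl hx).1 hz with rfl | h | ⟨a, _, h⟩
  · exact hxC
  · exact h.2.1
  · exact h.2.1

theorem par_notin (hcl : ∀ v ∈ A, v ∉ C → par v ∈ A) {x : V} (hl : Low C par A x) :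
    ∀ v ∈ A, v ∉ C → v ∉ Cl C par A x → par v ∉ Cl C par A x := by
  intro v hv hvC hvS hpS
  have hx := hl.big.1
  apply hvS
  rw [mem_Cl hx]
  rcases (mem_Cl hx).1 hpS with h | h | ⟨a, ha, h⟩
  · exact Or.inr (Or.inl ⟨hv, hvC, h⟩)
  · exact Or.inr (Or.inr ⟨par v, h, hv, hvC, rfl⟩)
  · exact absurd ⟨hv, hvC, rfl⟩ (hl.none a ha (par v) h v)

/-- edges inside a cluster -/
theorem Cl_edge (hp : Pot G C u par d) {x : V} (hl : Low C par A x) {v a : V}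
    (hv : v ∈ Cl C par A x) (hvx : v ≠ x) (ha : a ∈ Cl C par A x) (hadj : G.Adj v a) :
    (Kid C par A x v ∧ (a = x ∨ Kid C par A v a)) ∨
      (∃ w, Kid C par A x w ∧ Kid C par A w v ∧ a = w) := by
  have hx := hl.big.1
  have hvC := Cl_notC hx hl.big.2.1 v hv
  have hvA : v ∈ A := (Finset.mem_filter.1 hv).1
  have haA : a ∈ A := (Finset.mem_filter.1 ha).1
  rcases (mem_Cl hx).1 hv with rfl | h | ⟨w, hw, h⟩
  · exact absurd rfl hvx
  · left
    refine ⟨h, ?_⟩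
    rcases hp.edge v a hadj with h1 | h1 | h1
    · exact absurd h1.1 hvC
    · left; rw [h1.2, h.2.2]
    · right; exact ⟨haA, h1.1, h1.2.symm⟩
  · right
    refine ⟨w, hw, h, ?_⟩
    rcases hp.edge v a hadj with h1 | h1 | h1
    · exact absurd h1.1 hvC
    · rw [h1.2, h.2.2]
    · exact absurd ⟨haA, h1.1, h1.2.symm⟩ (hl.none w hw v h a)

theorem Cl_att (hp : Pot G C u par d) (hCA : C ⊆ A) (hcl : ∀ v ∈ A, v ∉ C → par v ∈ A) {x : V}
    (hl : Low C par A x) : Att G (A \ Cl C par A x) (Cl C par A x) x (par x) := by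
  have hx := hl.big.1
  have hxC := hl.big.2.1
  have hxS : x ∈ Cl C par A x := (mem_Cl hx).2 (Or.inl rfl)
  refine ⟨Finset.sdiff_disjoint, hxS, ?_, hp.adj x hxC, ?_, ?_, ?_⟩
  · refine Finset.mem_sdiff.2 ⟨hcl x hx hxC, fun h => ?_⟩
    have h0 := hp.dep x hxC
    rcases (mem_Cl hx).1 h with h | h | ⟨a, ha, h⟩
    · rw [h] at h0; omega
    · have := hp.kd h; omega
    · have := hp.kd h; have := hp.kd ha; omega
  · intro p hpA q hq hadj
    rw [Finset.mem_sdiff] at hpA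
    have hqC := Cl_notC hx hxC q hq
    rcases hp.edge p q hadj with h | h | h
    · exact absurd h.2 hqC
    · exact absurd (h.2 ▸ hq) (par_notin hcl hl p hpA.1 h.1 hpA.2)
    · rcases (mem_Cl hx).1 hq with rfl | h' | ⟨a, ha, h'⟩
      · exact ⟨h.2, rfl⟩
      · rw [h'.2.2] at h
        exact absurd (h.2 ▸ hxS) hpA.2
      · rw [h'.2.2] at h
        exact absurd ((mem_Cl hx).2 (Or.inr (Or.inl (h.2 ▸ ha)))) hpA.2
  · intro v hv a ha b hb hva hvb
    rw [Finset.mem_erase] at hv ha hb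
    rcases hp.Cl_edge hl hv.2 hv.1 ha.2 hva with ⟨h1, h2⟩ | ⟨w, h1, h2, h3⟩
    · rcases hp.Cl_edge hl hv.2 hv.1 hb.2 hvb with ⟨h1', h2'⟩ | ⟨w', h1', h2', h3'⟩
      · exact hl.uniq v h1 a b (h2.resolve_left ha.1) (h2'.resolve_left hb.1)
      · exfalso
        have := hp.kd h1'
        have e : x = w' := h1.2.2.symm.trans h2'.2.2
        rw [e] at this
        omega
    · rcases hp.Cl_edge hl hv.2 hv.1 hb.2 hvb with ⟨h1', h2'⟩ | ⟨w', h1', h2', h3'⟩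
      · exfalso
        have := hp.kd h1
        have e : x = w := h1'.2.2.symm.trans h2.2.2
        rw [e] at this
        omega
      · rw [h3, h3', ← h2.2.2, ← h2'.2.2]
  · intro hds
    rcases hl.big.2.2 with ⟨a, b, ha, hb, hab⟩ | ⟨a, g, ha, hg⟩
    · exact hab (hds x hxS a ((mem_Cl hx).2 (Or.inr (Or.inl ha))) b
        ((mem_Cl hx).2 (Or.inr (Or.inl hb))) (hp.kadj ha).symm (hp.kadj hb).symm)
    · have := hds a ((mem_Cl hx).2 (Or.inr (Or.inl ha))) x hxS g
        ((mem_Cl hx).2 (Or.inr (Or.inr ⟨a, ha, hg⟩))) (hp.kadj ha) (hp.kadj hg).symm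
      have h1 := hp.kd ha
      have h2 := hp.kd hg
      rw [this] at h1
      omega

/-- second optimal vertex -/
theorem Cl_opt (hp : Pot G C u par d) {x : V} (hl : Low C par A x)
    (h4 : 4 ≤ (Cl C par A x).card) {s : V} (hs : s ∈ opt G (Cl C par A x)) (hsx : s ≠ x) :
    ∃ b g, Kid C par A x s ∧ Kid C par A x b ∧ b ≠ s ∧ Kid C par A s g ∧ (∀ z, ¬ Kid C par A b z) ∧
      ∀ z ∈ Cl C par A x, z = x ∨ z = s ∨ z = b ∨ z = g := by
  have hx := hl.big.1
  have hxS : x ∈ Cl C par A x := (mem_Cl hx).2 (Or.inl rfl)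
  have hkS : ∀ a, Kid C par A x a → a ∈ Cl C par A x := fun a ha => (mem_Cl hx).2 (Or.inr (Or.inl ha))
  have hgS : ∀ a g, Kid C par A x a → Kid C par A a g → g ∈ Cl C par A x :=
    fun a g ha hg => (mem_Cl hx).2 (Or.inr (Or.inr ⟨a, ha, hg⟩))
  simp only [opt, Finset.mem_filter] at hs
  obtain ⟨hsS, hds⟩ := hs
  have hk2 : ∀ a b, Kid C par A x a → Kid C par A x b → a ≠ s → b ≠ s → a = b := by
    intro a b ha hb has hbs
    exact hds x (Finset.mem_erase.2 ⟨hsx.symm, hxS⟩) a (Finset.mem_erase.2 ⟨has, hkS a ha⟩) b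
      (Finset.mem_erase.2 ⟨hbs, hkS b hb⟩) (hp.kadj ha).symm (hp.kadj hb).symm
  rcases (mem_Cl hx).1 hsS with h | hks | ⟨a, ha, hg⟩
  · exact absurd h hsx
  · by_cases hb : ∃ b, Kid C par A x b ∧ b ≠ s
    · obtain ⟨b, hb, hbs⟩ := hb
      have hbn : ∀ z, ¬ Kid C par A b z := by
        intro z hz
        have hzs : z ≠ s := by
          rintro rfl
          have h1 := hp.kd hb
          have e : b = x := hz.2.2.symm.trans hks.2.2
          rw [e] at h1
          omega
        have := hds b (Finset.mem_erase.2 ⟨hbs, hkS b hb⟩) x (Finset.mem_erase.2 ⟨hsx.symm, hxS⟩) z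
          (Finset.mem_erase.2 ⟨hzs, hgS b z hb hz⟩) (hp.kadj hb) (hp.kadj hz).symm
        have h1 := hp.kd hb
        have h2 := hp.kd hz
        rw [this] at h1
        omega
      have hgr : ∀ w z, Kid C par A x w → Kid C par A w z → w = s := by
        intro w z hw hz
        by_contra hws
        have := hk2 w b hw hb hws hbs
        subst this
        exact hbn z hz
      by_cases hg : ∃ g, Kid C par A s g
      · obtain ⟨g, hg⟩ := hg
        refine ⟨b, g, hks, hb, hbs, hg, hbn, fun z hz => ?_⟩
        rcases (mem_Cl hx).1 hz with h | h | ⟨w, hw, h⟩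
        · exact Or.inl h
        · by_cases hzs : z = s
          · exact Or.inr (Or.inl hzs)
          · exact Or.inr (Or.inr (Or.inl (hk2 z b h hb hzs hbs)))
        · have := hgr w z hw h
          subst this
          exact Or.inr (Or.inr (Or.inr (hl.uniq w hw z g h hg)))
      · exfalso
        have := card_le_of_sub3 (S := Cl C par A x) (a := x) (b := s) (c := b) (fun z hz => by
          rcases (mem_Cl hx).1 hz with h | h | ⟨w, hw, h⟩
          · exact Or.inl h
          · by_cases hzs : z = s
            · exact Or.inr (Or.inl hzs)
            · exact Or.inr (Or.inr (hk2 z b h hb hzs hbs))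
          · have := hgr w z hw h
            subst this
            exact absurd ⟨z, h⟩ hg)
        omega
    · exfalso
      push Not at hb
      by_cases hg : ∃ g, Kid C par A s g
      · obtain ⟨g, hg⟩ := hg
        have := card_le_of_sub3 (S := Cl C par A x) (a := x) (b := s) (c := g) (fun z hz => by
          rcases (mem_Cl hx).1 hz with h | h | ⟨w, hw, h⟩
          · exact Or.inl h
          · exact Or.inr (Or.inl (hb z h))
          · have := hb w hw
            subst this
            exact Or.inr (Or.inr (hl.uniq w hw z g h hg)))
        omega
      · have := card_le_of_sub3 (S := Cl C par A x) (a := x) (b := s) (c := s) (fun z hz => by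
          rcases (mem_Cl hx).1 hz with h | h | ⟨w, hw, h⟩
          · exact Or.inl h
          · exact Or.inr (Or.inl (hb z h))
          · have := hb w hw
            subst this
            exact absurd ⟨z, h⟩ hg)
        omega
  · exfalso
    have hks : ∀ b, Kid C par A x b → b ≠ s := by
      rintro b hb rfl
      have h1 := hp.kd ha
      have e : x = a := hb.2.2.symm.trans hg.2.2
      rw [e] at h1
      omega
    have := card_le_of_sub3 (S := Cl C par A x) (a := x) (b := a) (c := s) (fun z hz => by
      rcases (mem_Cl hx).1 hz with h | h | ⟨w, hw, h⟩
      · exact Or.inl h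
      · exact Or.inr (Or.inl (hk2 z a h ha (hks z h) (hks a ha)))
      · have := hk2 w a hw ha (hks w hw) (hks a ha)
        subst this
        exact Or.inr (Or.inr (hl.uniq w hw z s h hg)))
    omega

theorem Cl_shape (hp : Pot G C u par d) {x : V} (hl : Low C par A x) :
    Sh3 G (Cl C par A x) ∨ Sh4 G (Cl C par A x) ∨ Sh5 G (Cl C par A x) := by
  have hx := hl.big.1
  have hxS : x ∈ Cl C par A x := (mem_Cl hx).2 (Or.inl rfl)
  have hkS : ∀ a, Kid C par A x a → a ∈ Cl C par A x := fun a ha => (mem_Cl hx).2 (Or.inr (Or.inl ha))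
  have hgS : ∀ a g, Kid C par A x a → Kid C par A a g → g ∈ Cl C par A x :=
    fun a g ha hg => (mem_Cl hx).2 (Or.inr (Or.inr ⟨a, ha, hg⟩))
  have hne : ∀ a b, Kid C par A a b → b ≠ a := by
    rintro a b h rfl
    have := hp.kd h
    omega
  -- three distinct vertices with a centre
  have h3 : ∃ c y z, c ∈ Cl C par A x ∧ y ∈ Cl C par A x ∧ z ∈ Cl C par A x ∧ c ≠ y ∧ c ≠ z ∧ y ≠ z ∧
      G.Adj c y ∧ G.Adj c z := by
    rcases hl.big.2.2 with ⟨a, b, ha, hb, hab⟩ | ⟨a, g, ha, hg⟩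
    · exact ⟨x, a, b, hxS, hkS a ha, hkS b hb, (hne _ _ ha).symm, (hne _ _ hb).symm, hab,
        (hp.kadj ha).symm, (hp.kadj hb).symm⟩
    · refine ⟨a, x, g, hkS a ha, hxS, hgS a g ha hg, hne _ _ ha, (hne _ _ hg).symm, ?_,
        hp.kadj ha, (hp.kadj hg).symm⟩
      rintro rfl
      have h1 := hp.kd ha
      have h2 := hp.kd hg
      omega
  obtain ⟨c, y, z, hc, hy, hz, hcy, hcz, hyz, hay, haz⟩ := h3
  have hsub : {c, y, z} ⊆ Cl C par A x := by
    intro w hw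
    simp only [Finset.mem_insert, Finset.mem_singleton] at hw
    rcases hw with rfl | rfl | rfl <;> assumption
  have hc3 : ({c, y, z} : Finset V).card = 3 := Finset.card_eq_three.2 ⟨c, y, z, hcy, hcz, hyz, rfl⟩
  have hge := Finset.card_le_card hsub
  rw [hc3] at hge
  by_cases e3 : (Cl C par A x).card = 3
  · left
    have heq := Finset.eq_of_subset_of_card_le hsub (by omega)
    refine ⟨e3, c, hc, fun w hw hwc => ?_⟩
    rw [← heq] at hw
    simp only [Finset.mem_insert, Finset.mem_singleton] at hw
    rcases hw with rfl | rfl | rfl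
    · exact absurd rfl hwc
    · exact hay
    · exact haz
  have h4 : 4 ≤ (Cl C par A x).card := by omega
  by_cases hs : ∃ s ∈ opt G (Cl C par A x), s ≠ x
  · right; left
    obtain ⟨s, hso, hsx⟩ := hs
    obtain ⟨b, g, ks, kb, hbs, kg, hbn, hall⟩ := hp.Cl_opt hl h4 hso hsx
    have hopt : ∀ t ∈ opt G (Cl C par A x), t = x ∨ t = s := by
      intro t ht
      by_contra hcon
      push Not at hcon
      obtain ⟨b', g', ks', kb', hbs', kg', hbn', hall'⟩ := hp.Cl_opt hl h4 ht hcon.1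
      rcases hall t (opt_sub _ _ ht) with h | h | h | h
      · exact hcon.1 h
      · exact hcon.2 h
      · subst h; exact hbn g' kg'
      · subst h
        have h1 := hp.kd ks
        have e : x = s := ks'.2.2.symm.trans kg.2.2
        rw [e] at h1
        omega
    have hoc : (opt G (Cl C par A x)).card ≤ 2 := by
      refine (Finset.card_le_card (t := {x, s}) ?_).trans Finset.card_le_two
      intro t ht
      simpa using hopt t ht
    have hcard : (Cl C par A x).card = 4 := by
      have : (Cl C par A x).card ≤ 4 := by
        refine (Finset.card_le_card (t := {x, s, b, g}) ?_).trans Finset.card_le_four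
        intro t ht
        simpa using hall t ht
      omega
    have hgs : g ≠ s := hne _ _ kg
    have hbx : b ≠ x := hne _ _ kb
    have hgx : g ≠ x := by
      rintro rfl
      have h1 := hp.kd ks
      have h2 := hp.kd kg
      omega
    have hIx : ¬ Iso G (Cl C par A x) {s} x := fun hI =>
      hI.2.2 b (hkS b kb) (by simpa using hbs) (hp.kadj kb).symm
    have hIs : ¬ Iso G (Cl C par A x) {x} s := fun hI =>
      hI.2.2 g (hgS s g ks kg) (by simpa using hgx) (hp.kadj kg).symm
    refine ⟨hcard, hoc, fun w hw => ⟨fun hwo t ht hI => ?_, ?_⟩⟩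
    · rcases hopt w hwo with rfl | rfl <;> rcases hopt t ht with rfl | rfl
      · exact hI.2.1 (by simp)
      · exact hIx hI
      · exact hIs hI
      · exact hI.2.1 (by simp)
    · rw [Finset.card_le_one]
      intro t ht t' ht'
      rw [Finset.mem_filter] at ht ht'
      by_contra htt
      have hI1 : Iso G (Cl C par A x) {x} w ∧ Iso G (Cl C par A x) {s} w := by
        rcases hopt t ht.1 with rfl | rfl <;> rcases hopt t' ht'.1 with rfl | rfl
        · exact absurd rfl htt
        · exact ⟨ht.2, ht'.2⟩
        · exact ⟨ht'.2, ht.2⟩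
        · exact absurd rfl htt
      rcases hall w hw with rfl | rfl | rfl | rfl
      · exact hI1.1.2.1 (by simp)
      · exact hI1.2.2.1 (by simp)
      · exact hI1.2.2.2 x hxS (by simpa using hsx.symm) (hp.kadj kb)
      · exact hI1.1.2.2 s (hkS s ks) (by simpa using hsx) (hp.kadj kg)
  · push Not at hs
    have hoc : opt G (Cl C par A x) ⊆ {x} := fun t ht => by simpa using hs t ht
    have hoc1 : (opt G (Cl C par A x)).card ≤ 1 := by simpa using Finset.card_le_card hoc
    by_cases e4 : (Cl C par A x).card = 4
    · right; left
      refine ⟨e4, by omega, fun w hw => ⟨fun hwo t ht hI => ?_, ?_⟩⟩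
      · rw [hs w hwo, hs t ht] at hI
        exact hI.2.1 (by simp)
      · exact (Finset.card_filter_le _ _).trans hoc1
    · right; right
      exact ⟨by omega, hoc1⟩

theorem peel (hp : Pot G C u par d) : ∀ n, ∀ A : Finset V, A.card = n → C ⊆ A →
    (∀ v ∈ A, v ∉ C → par v ∈ A) →
    ∃ K P, Bd G K A P ∧ C ⊆ K ∧ (∀ v ∈ K, v ∉ C → par v ∈ K) ∧ ∀ x, ¬ Big C par K x := by
  intro n
  induction n using Nat.strong_induction_on with
  | _ n ih =>
    intro A hn hCA hcl
    by_cases hb : ∃ x, Big C par A x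
    · obtain ⟨x0, hx0⟩ := hb
      obtain ⟨x, hx, hmax⟩ := Finset.exists_max_image (A.filter (fun x => Big C par A x)) d
        ⟨x0, Finset.mem_filter.2 ⟨hx0.1, hx0⟩⟩
      rw [Finset.mem_filter] at hx
      have hl := hp.low_of_max hx.2 (fun y hy => hmax y (Finset.mem_filter.2 ⟨hy.1, hy⟩))
      have hatt := hp.Cl_att hCA hcl hl
      have hsub : Cl C par A x ⊆ A := Finset.filter_subset _ _
      have hlt : (A \ Cl C par A x).card < n := by
        rw [← hn]
        apply Finset.card_lt_card
        refine ⟨Finset.sdiff_subset, fun h => ?_⟩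
        exact (Finset.mem_sdiff.1 (h hx.1)).2 hatt.hx
      obtain ⟨K, P, h1, h2, h3, h4⟩ := ih _ hlt (A \ Cl C par A x) rfl
        (fun z hz => Finset.mem_sdiff.2 ⟨hCA hz, fun h => Cl_notC hx.1 hx.2.2.1 z h hz⟩)
        (fun v hv hvC => by
          rw [Finset.mem_sdiff] at hv ⊢
          exact ⟨hcl v hv.1 hvC, par_notin hcl hl v hv.1 hvC hv.2⟩)
      refine ⟨K, insert (Cl C par A x) P, ?_, h2, h3, h4⟩
      have := Bd.step h1 hatt (hp.Cl_shape hl)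
      rwa [Finset.sdiff_union_of_subset hsub] at this
    · push Not at hb
      exact ⟨A, ∅, Bd.base, hCA, hcl, hb⟩

end Pot

/-- numerical facts on the cycle -/
structure Cyc (G : SimpleGraph V) (C : Finset V) (u : V) (j : ℕ) : Prop where
  hj : 1 ≤ j
  hm : (MD G C).card ≤ 3 * j + 2
  hx : cnt G C (fun D => u ∈ D) ≤ j + 1
  hy : cnt G C (fun D => Iso G C D u) ≤ 1
  lower : ∀ E ⊆ C, Ds G (C \ E) → j + 1 ≤ E.card
  ex : ∃ D ⊆ C, u ∈ D ∧ D.card = j + 1 ∧ Ds G (C \ D)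

namespace Pot

variable {G : SimpleGraph V} {C K : Finset V} {u : V} {par : V → V} {d : V → ℕ} {j : ℕ}

theorem level (hp : Pot G C u par d) (hcl : ∀ v ∈ K, v ∉ C → par v ∈ K)
    (hb : ∀ x, ¬ Big C par K x) {z : V} (hz : z ∈ K) (hzC : z ∉ C) :
    par z = u ∨ (par z ∈ K ∧ par z ∉ C ∧ par (par z) = u) := by
  by_cases h1 : par z ∈ C
  · exact Or.inl (hp.parC z hzC h1)
  · right
    have h2 := hcl z hz hzC
    refine ⟨h2, h1, ?_⟩
    by_contra h3
    have h4 : par (par z) ∉ C := fun h => h3 (hp.parC _ h1 h)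
    exact hb (par (par z)) ⟨hcl _ h2 h1, h4, Or.inr ⟨par z, z, ⟨h2, h1, rfl⟩, ⟨hz, hzC, rfl⟩⟩⟩

theorem core_ds (hp : Pot G C u par d) (hcl : ∀ v ∈ K, v ∉ C → par v ∈ K)
    (hb : ∀ x, ¬ Big C par K x) {D : Finset V} (huD : u ∈ D) (hD : Ds G (C \ D)) :
    Ds G (K \ D) := by
  intro v hv a ha b hb' hva hvb
  simp only [Finset.mem_sdiff] at hv ha hb'
  by_cases hvC : v ∈ C
  · have key : ∀ a, a ∉ D → G.Adj v a → a ∈ C := by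
      intro a ha hva
      rcases hp.edge v a hva with h | h | h
      · exact h.2
      · exact absurd hvC h.1
      · exfalso
        have := hp.parC a h.1 (h.2 ▸ hvC)
        rw [← h.2] at this
        exact hv.2 (this ▸ huD)
    exact hD v (by simp [hvC, hv.2]) a (by simp [key a ha.2 hva, ha.2]) b
      (by simp [key b hb'.2 hvb, hb'.2]) hva hvb
  · have key : ∀ a, a ∈ K → G.Adj v a → a = par v ∨ Kid C par K v a := by
      intro a ha hva
      rcases hp.edge v a hva with h | h | h
      · exact absurd h.1 hvC
      · exact Or.inl h.2
      · exact Or.inr ⟨ha, h.1, h.2.symm⟩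
    rcases hp.level hcl hb hv.1 hvC with h1 | ⟨h1, h2, h3⟩
    · have ka := (key a ha.1 hva).resolve_left (fun h => ha.2 (by rw [h, h1]; exact huD))
      have kb := (key b hb'.1 hvb).resolve_left (fun h => hb'.2 (by rw [h, h1]; exact huD))
      by_contra hab
      exact hb v ⟨hv.1, hvC, Or.inl ⟨a, b, ka, kb, hab⟩⟩
    · have hk : ∀ a, ¬ Kid C par K v a := fun a ka =>
        hb (par v) ⟨h1, h2, Or.inr ⟨v, a, ⟨hv.1, hvC, rfl⟩, ka⟩⟩
      rw [(key a ha.1 hva).resolve_right (hk a), (key b hb'.1 hvb).resolve_right (hk b)]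

theorem core_MD (hp : Pot G C u par d) (hc : Cyc G C u j) (hCK : C ⊆ K)
    (hcl : ∀ v ∈ K, v ∉ C → par v ∈ K)
    (hb : ∀ x, ¬ Big C par K x) : ∀ D ∈ MD G K, D ∈ MD G C := by
  intro D hD
  obtain ⟨h1, h2, h3⟩ := mem_MD.1 hD
  obtain ⟨D0, hD0, huD, hcard, hds⟩ := hc.ex
  have h4 := h3 D0 (hD0.trans hCK) (hp.core_ds hcl hb huD hds)
  have h5 : Ds G (C \ (D ∩ C)) := h2.mono (by
    intro z hz
    simp only [Finset.mem_sdiff, Finset.mem_inter] at hz ⊢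
    exact ⟨hCK hz.1, fun h => hz.2 ⟨h, hz.1⟩⟩)
  have h6 := hc.lower _ Finset.inter_subset_right h5
  have h7 : D ∩ C = D := Finset.eq_of_subset_of_card_le Finset.inter_subset_left (by omega)
  rw [h7] at h5
  refine mem_MD.2 ⟨Finset.inter_eq_left.1 h7, h5, fun E hE hE' => ?_⟩
  have := hc.lower E hE hE'
  omega

theorem main [Fintype V] (hp : Pot G C u par d) (hc : Cyc G C u j) {N : ℕ}
    (hN : Fintype.card V = C.card + N) : Tgt j N (MD G Finset.univ).card := by
  obtain ⟨K, P, hBd, hCK, hcl, hb⟩ := hp.peel _ Finset.univ rfl (Finset.subset_univ _)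
    (fun _ _ _ => Finset.mem_univ _)
  have hMD := hp.core_MD hc hCK hcl hb
  have hcard := hBd.card_eq
  rw [Finset.card_univ, hN] at hcard
  have hsd := Finset.card_sdiff_add_card_eq_card hCK
  have hsub : ∀ D ∈ MD G K, D ⊆ C := fun D hD => (mem_MD.1 (hMD D hD)).1
  have hle : ∀ Φ : Finset V → Prop, (∀ D ∈ MD G K, Φ D) → (MD G K).card ≤ cnt G C Φ := by
    intro Φ h
    unfold cnt
    apply Finset.card_le_card
    intro D hD
    rw [Finset.mem_filter]
    exact ⟨hMD D hD, h D hD⟩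
  have hle' : ∀ Φ : Finset V → Prop, cnt G K Φ ≤ cnt G C Φ := by
    intro Φ
    unfold cnt
    apply Finset.card_le_card
    intro D hD
    rw [Finset.mem_filter] at hD ⊢
    exact ⟨hMD D hD.1, hD.2⟩
  have hout : ∀ y ∈ C, ∀ x, x ∉ K → G.Adj x y → y = u := by
    intro y hy x hx hxy
    rcases hp.edge x y hxy with h | h | h
    · exact absurd (hCK h.1) hx
    · rw [h.2]; exact hp.parC x h.1 (h.2 ▸ hy)
    · exact absurd hy h.1
  rcases Nat.lt_or_ge 1 (K \ C).card with hL | hL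
  · refine fin3 (j := j) hBd ((hle (fun D => u ∈ D) ?_).trans hc.hx) (by omega)
    intro D hD
    by_contra huD
    have hds := MD_Ds hD
    have mem : ∀ z ∈ K, z ∉ C → z ∈ K \ D := fun z hz hzC =>
      Finset.mem_sdiff.2 ⟨hz, fun h => hzC (hsub D hD h)⟩
    have hu : u ∈ K \ D := Finset.mem_sdiff.2 ⟨hCK hp.huC, huD⟩
    have hpar : ∀ z ∈ K, z ∉ C → par z = u := by
      intro z hz hzC
      rcases hp.level hcl hb hz hzC with h | ⟨h1, h2, h3⟩
      · exact h
      · exfalso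
        have h4 := hp.adj _ h2
        rw [h3] at h4
        have := hds (par z) (mem _ h1 h2) z (mem z hz hzC) u hu (hp.adj z hzC).symm h4
        exact hzC (this ▸ hp.huC)
    obtain ⟨a, ha, b, hb', hab⟩ := Finset.one_lt_card.1 hL
    rw [Finset.mem_sdiff] at ha hb'
    have h1 := hp.adj a ha.2
    have h2 := hp.adj b hb'.2
    rw [hpar a ha.1 ha.2] at h1
    rw [hpar b hb'.1 hb'.2] at h2
    exact hab (hds u hu a (mem a ha.1 ha.2) b (mem b hb'.1 hb'.2) h1.symm h2.symm)
  · rcases Nat.lt_or_ge 0 (K \ C).card with hL0 | hL0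
    · obtain ⟨l, hl⟩ := Finset.card_eq_one.1 (show (K \ C).card = 1 by omega)
      have hl' : ∀ z, z ∈ K → z ∉ C → z = l := fun z h1 h2 => by
        have : z ∈ K \ C := Finset.mem_sdiff.2 ⟨h1, h2⟩
        rw [hl] at this
        simpa using this
      have hlm : l ∈ K \ C := by rw [hl]; simp
      obtain ⟨hlK, hlC⟩ := Finset.mem_sdiff.1 hlm
      have hladj := hp.adj l hlC
      have hpl : par l = u := by
        rcases hp.level hcl hb hlK hlC with h | ⟨h1, h2, h3⟩
        · exact h
        · have := hl' _ h1 h2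
          rw [this] at hladj
          exact absurd rfl hladj.ne
      rw [hpl] at hladj
      refine fin2 (u := u) (l := l) (j := j) ⟨hc.hj, hCK hp.huC, hlK, ?_, ?_, ?_, ?_, ?_, ?_⟩ hBd
        (by omega)
      · intro y hy x hx hxy
        by_cases hyC : y ∈ C
        · exact Or.inl (hout y hyC x hx hxy)
        · exact Or.inr (hl' y hy hyC)
      · refine (hle (fun D => u ∈ D ∨ Iso G C D u) ?_).trans ?_
        · intro D hD
          by_cases huD : u ∈ D
          · exact Or.inl huD
          · right
            have := Iso_of_adj (MD_Ds hD) hCK hp.huC hlK hlC huD (fun h => hlC (hsub D hD h))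
              hladj.symm
            rwa [Finset.inter_eq_left.2 (hsub D hD)] at this
        · rw [del_add_iso]
          have := hc.hx
          have := hc.hy
          omega
      · exact (hle' _).trans hc.hx
      · intro D hD hI
        exact hI.2.2 l hlK (fun h => hlC (hsub D hD h)) hladj.symm
      · exact fun D hD h => hlC (hsub D hD h)
      · intro D hD hI
        by_contra huD
        exact hI.2.2 u (hCK hp.huC) huD hladj
    · have hKC : K = C := by
        refine (Finset.Subset.antisymm hCK ?_).symm
        rw [← Finset.sdiff_eq_empty_iff_subset, ← Finset.card_eq_zero]
        omega
      subst hKC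
      exact fin1 ⟨hc.hj, hp.huC, hout, hc.hm, hc.hx, hc.hy⟩ hBd (by omega)

end Pot

/-! ### Counting on the cycle -/

theorem cnt_le_card {G : SimpleGraph V} {A : Finset V} {Φ : Finset V → Prop}
    {S : Finset (Finset V)} (h : ∀ D ∈ MD G A, Φ D → D ∈ S) : cnt G A Φ ≤ S.card := by
  unfold cnt
  apply Finset.card_le_card
  intro D hD
  simp only [Finset.mem_filter] at hD
  exact h D hD.1 hD.2

namespace Cy

variable {j : ℕ}

def Hit (E : Finset (ZMod (3 * j + 2))) : Prop := ∀ i, i ∈ E ∨ i + 1 ∈ E ∨ i + 2 ∈ E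

noncomputable def ind (E : Finset (ZMod (3 * j + 2))) (i : ZMod (3 * j + 2)) : ℕ :=
  if i ∈ E then 1 else 0

noncomputable def T (E : Finset (ZMod (3 * j + 2))) (i : ZMod (3 * j + 2)) : ℕ :=
  ind E i + ind E (i + 1) + ind E (i + 2)

noncomputable def W (j : ℕ) (s : ZMod (3 * j + 2)) : Finset (ZMod (3 * j + 2)) :=
  (Finset.range (j + 1)).image (fun t => s + ((3 * t : ℕ) : ZMod (3 * j + 2)))

theorem ind_pos {E : Finset (ZMod (3 * j + 2))} {i} (h : i ∈ E) : ind E i = 1 := by simp [ind, h]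

theorem ind_le (E : Finset (ZMod (3 * j + 2))) (i) : ind E i ≤ 1 := by
  unfold ind; split_ifs <;> simp

theorem ind_mem {E : Finset (ZMod (3 * j + 2))} {i} (h : ind E i = 1) : i ∈ E := by
  unfold ind at h; split_ifs at h with h'; exact h'

theorem T_sum (E : Finset (ZMod (3 * j + 2))) : ∑ i, T E i = 3 * E.card := by
  have h0 : ∑ i, ind E i = E.card := by simp [ind]
  have hs : ∀ c, ∑ i, ind E (i + c) = E.card := fun c => by
    rw [← h0]; exact Equiv.sum_comp (Equiv.addRight c) (ind E)
  unfold T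
  rw [Finset.sum_add_distrib, Finset.sum_add_distrib, h0, hs, hs]
  ring

theorem T_pos {E : Finset (ZMod (3 * j + 2))} (h : Hit E) (i) : 1 ≤ T E i := by
  unfold T
  rcases h i with h | h | h <;> have := ind_pos h <;> omega

theorem lower {E : Finset (ZMod (3 * j + 2))} (h : Hit E) : j + 1 ≤ E.card := by
  have h1 : ∑ _i : ZMod (3 * j + 2), 1 ≤ ∑ i, T E i := Finset.sum_le_sum fun i _ => T_pos h i
  rw [T_sum] at h1
  simp [ZMod.card] at h1
  omega

theorem cast_ne {a b : ℕ} (ha : a < 3 * j + 2) (hb : b < 3 * j + 2) (h : a ≠ b) :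
    (a : ZMod (3 * j + 2)) ≠ b := by
  intro h'
  rw [ZMod.natCast_eq_natCast_iff', Nat.mod_eq_of_lt ha, Nat.mod_eq_of_lt hb] at h'
  exact h h'

theorem cast_ne0 {a : ℕ} (ha : a < 3 * j + 2) (h : a ≠ 0) :
    (a : ZMod (3 * j + 2)) ≠ 0 := by
  have := cast_ne (j := j) ha (b := 0) (by omega) h
  simpa using this

theorem W_card (s : ZMod (3 * j + 2)) : (W j s).card = j + 1 := by
  unfold W
  rw [Finset.card_image_of_injOn, Finset.card_range]
  intro a ha b hb hab
  simp only [Finset.coe_range, Set.mem_Iio] at ha hb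
  by_contra h
  exact cast_ne (j := j) (a := 3 * a) (b := 3 * b) (by omega) (by omega) (by omega)
    (add_left_cancel hab)

theorem struct (hj : 1 ≤ j) {E : Finset (ZMod (3 * j + 2))} (h : Hit E) (hE : E.card = j + 1) :
    ∃ s, E = W j s ∧ ∀ i, i + 2 ≠ s → T E i = 1 := by
  have h1 : ∑ i, (T E i - 1) = 1 := by
    have h2 : ∑ i, (T E i - 1) + ∑ _i : ZMod (3 * j + 2), 1 = ∑ i, T E i := by
      rw [← Finset.sum_add_distrib]
      exact Finset.sum_congr rfl fun i _ => by have := T_pos h i; omega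
    rw [T_sum, hE] at h2
    simp [ZMod.card] at h2
    omega
  obtain ⟨i0, hi0⟩ : ∃ i, T E i - 1 ≠ 0 := by
    by_contra hh
    push Not at hh
    simp [hh] at h1
  have h2 := Finset.sum_erase_add Finset.univ (fun i => T E i - 1) (Finset.mem_univ i0)
  have h3 : ∑ i ∈ Finset.univ.erase i0, (T E i - 1) = 0 := by omega
  have h4 : T E i0 = 2 := by omega
  have h5 : ∀ i, i ≠ i0 → T E i = 1 := by
    intro i hi
    have := Finset.sum_eq_zero_iff.1 h3 i (by simp [hi])
    have := T_pos h i
    omega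
  have one : (1 : ZMod (3 * j + 2)) ≠ 0 := by
    simpa using cast_ne0 (j := j) (a := 1) (by omega) (by omega)
  have hi : i0 + 2 ∈ E := by
    apply ind_mem
    have a1 := h5 (i0 - 1) (fun h => one (by simpa using h))
    have e1 : i0 - 1 + 1 = i0 := by ring
    have e2 : i0 - 1 + 2 = i0 + 1 := by ring
    unfold T at h4 a1
    rw [e1, e2] at a1
    have := ind_le E i0
    have := ind_le E (i0 + 1)
    have := ind_le E (i0 + 2)
    omega
  refine ⟨i0 + 2, ?_, fun i hi => h5 i (fun h => hi (by rw [h]))⟩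
  symm
  apply Finset.eq_of_subset_of_card_le
  · intro z hz
    unfold W at hz
    rw [Finset.mem_image] at hz
    obtain ⟨t, ht, rfl⟩ := hz
    rw [Finset.mem_range] at ht
    induction t with
    | zero => simpa using hi
    | succ t ih =>
      have ih := ih (by omega)
      set x := i0 + 2 + ((3 * t : ℕ) : ZMod (3 * j + 2)) with hx
      have b1 := h5 x (fun hh => by
        refine cast_ne0 (j := j) (a := 2 + 3 * t) (by omega) (by omega) ?_
        rw [hx] at hh
        push_cast at hh ⊢
        linear_combination hh)
      have b2 := h5 (x + 1) (fun hh => by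
        refine cast_ne0 (j := j) (a := 3 + 3 * t) (by omega) (by omega) ?_
        rw [hx] at hh
        push_cast at hh ⊢
        linear_combination hh)
      unfold T at b1 b2
      have e1 : x + 1 + 1 = x + 2 := by ring
      have e2 : x + 1 + 2 = x + 3 := by ring
      rw [e1, e2] at b2
      have := ind_pos ih
      have : x + 3 ∈ E := ind_mem (by omega)
      convert this using 1
      rw [hx]
      push_cast
      ring
  · rw [W_card, hE]

theorem W0_hit (j : ℕ) : Hit (W j 0) := by
  intro i
  have hi : ((i.val : ℕ) : ZMod (3 * j + 2)) = i := ZMod.natCast_zmod_val i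
  have hlt : i.val < 3 * j + 2 := ZMod.val_lt i
  have key : ∀ t a : ℕ, t ≤ j → (i.val + a) = 3 * t → i + (a : ZMod (3 * j + 2)) ∈ W j 0 := by
    intro t a ht h
    unfold W
    rw [Finset.mem_image]
    refine ⟨t, by simp; omega, ?_⟩
    rw [← h]
    push_cast
    rw [hi]
    ring
  have h0 : (0 : ZMod (3 * j + 2)) ∈ W j 0 := by
    unfold W
    rw [Finset.mem_image]
    exact ⟨0, by simp, by simp⟩
  by_cases hl : i.val = 3 * j + 1
  · right; left
    have : i + 1 = 0 := by
      have : ((3 * j + 2 : ℕ) : ZMod (3 * j + 2)) = 0 := ZMod.natCast_self _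
      rw [← hi, hl]
      push_cast at this ⊢
      linear_combination this
    rw [this]; exact h0
  · obtain h | h | h : i.val % 3 = 0 ∨ i.val % 3 = 1 ∨ i.val % 3 = 2 := by omega
    · left; simpa using key (i.val / 3) 0 (by omega) (by omega)
    · right; right; simpa using key (i.val / 3 + 1) 2 (by omega) (by omega)
    · right; left; simpa using key (i.val / 3 + 1) 1 (by omega) (by omega)

section graph

variable {G : SimpleGraph V} {C : Finset V} {φ : ZMod (3 * j + 2) → V}

noncomputable def pre (φ : ZMod (3 * j + 2) → V) (D : Finset V) : Finset (ZMod (3 * j + 2)) :=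
  Finset.univ.filter (fun i => φ i ∈ D)

theorem mem_pre {D : Finset V} {i} : i ∈ pre φ D ↔ φ i ∈ D := by simp [pre]

theorem image_pre (hC : C = Finset.univ.image φ) {D : Finset V} (hD : D ⊆ C) :
    (pre φ D).image φ = D := by
  ext z
  rw [Finset.mem_image]
  constructor
  · rintro ⟨i, hi, rfl⟩; exact mem_pre.1 hi
  · intro hz
    have := hD hz
    rw [hC, Finset.mem_image] at this
    obtain ⟨i, _, rfl⟩ := this
    exact ⟨i, mem_pre.2 hz, rfl⟩

theorem card_pre (hφ : Function.Injective φ) (hC : C = Finset.univ.image φ) {D : Finset V}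
    (hD : D ⊆ C) : (pre φ D).card = D.card := by
  conv_rhs => rw [← image_pre hC hD, Finset.card_image_of_injective _ hφ]

theorem ds_iff (hj : 1 ≤ j) (hφ : Function.Injective φ) (hC : C = Finset.univ.image φ)
    (hadj : ∀ a b, G.Adj (φ a) (φ b) ↔ b = a + 1 ∨ a = b + 1) {D : Finset V} :
    Ds G (C \ D) ↔ Hit (pre φ D) := by
  have hmC : ∀ i, φ i ∈ C := fun i => by rw [hC]; exact Finset.mem_image_of_mem _ (Finset.mem_univ _)
  constructor
  · intro h i
    by_contra hh
    push Not at hh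
    simp only [mem_pre] at hh
    have m : ∀ i, φ i ∉ D → φ i ∈ C \ D := fun i hi => Finset.mem_sdiff.2 ⟨hmC i, hi⟩
    have := h (φ (i + 1)) (m _ hh.2.1) (φ i) (m _ hh.1) (φ (i + 2)) (m _ hh.2.2)
      ((hadj _ _).2 (Or.inr rfl)) ((hadj _ _).2 (Or.inl (by ring)))
    have h2 := hφ this
    have : ((2 : ℕ) : ZMod (3 * j + 2)) ≠ 0 := cast_ne0 (by omega) (by omega)
    apply this
    push_cast
    linear_combination -h2
  · intro h v hv a ha b hb hva hvb
    rw [Finset.mem_sdiff, hC, Finset.mem_image] at hv ha hb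
    obtain ⟨⟨v, _, rfl⟩, hv⟩ := hv
    obtain ⟨⟨a, _, rfl⟩, ha⟩ := ha
    obtain ⟨⟨b, _, rfl⟩, hb⟩ := hb
    rw [hadj] at hva hvb
    have key : ∀ a b : ZMod (3 * j + 2), φ a ∉ D → φ b ∉ D → a = v + 1 → v = b + 1 → False := by
      intro a b ha hb h1 h2
      have := h b
      simp only [mem_pre] at this
      have e : b + 2 = a := by rw [h1, h2]; ring
      rw [e, ← h2] at this
      tauto
    rcases hva with h1 | h1 <;> rcases hvb with h2 | h2
    · rw [h1, h2]
    · exact (key a b ha hb h1 h2).elim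
    · exact (key b a hb ha h2 h1).elim
    · rw [add_right_cancel (h1.symm.trans h2)]

theorem cyc (hj : 1 ≤ j) (hφ : Function.Injective φ) (hC : C = Finset.univ.image φ)
    (hadj : ∀ a b, G.Adj (φ a) (φ b) ↔ b = a + 1 ∨ a = b + 1) : Cyc G C (φ 0) j := by
  have hmC : ∀ i, φ i ∈ C := fun i => by rw [hC]; exact Finset.mem_image_of_mem _ (Finset.mem_univ _)
  have hlow : ∀ E ⊆ C, Ds G (C \ E) → j + 1 ≤ E.card := by
    intro E hE h
    rw [← card_pre hφ hC hE]
    exact lower ((ds_iff hj hφ hC hadj).1 h)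
  have hpre : pre φ ((W j 0).image φ) = W j 0 := by
    ext i
    rw [mem_pre, Finset.mem_image]
    constructor
    · rintro ⟨a, ha, h⟩; rwa [← hφ h]
    · exact fun h => ⟨i, h, rfl⟩
  have hsub0 : (W j 0).image φ ⊆ C := by
    rw [hC]; exact Finset.image_subset_image (Finset.subset_univ _)
  have hex : ∃ D ⊆ C, φ 0 ∈ D ∧ D.card = j + 1 ∧ Ds G (C \ D) := by
    refine ⟨(W j 0).image φ, hsub0, ?_, ?_, ?_⟩
    · apply Finset.mem_image_of_mem
      unfold W
      rw [Finset.mem_image]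
      exact ⟨0, by simp, by simp⟩
    · rw [Finset.card_image_of_injective _ hφ, W_card]
    · rw [ds_iff hj hφ hC hadj, hpre]; exact W0_hit j
  have hst : ∀ D ∈ MD G C, ∃ s, D = (W j s).image φ ∧ ∀ i, i + 2 ≠ s → T (pre φ D) i = 1 := by
    intro D hD
    obtain ⟨h1, h2, h3⟩ := mem_MD.1 hD
    obtain ⟨D0, a1, a2, a3, a4⟩ := hex
    have b1 := h3 D0 a1 a4
    have b2 := hlow D h1 h2
    obtain ⟨s, hs, hs'⟩ := struct hj ((ds_iff hj hφ hC hadj).1 h2)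
      (by rw [card_pre hφ hC h1]; omega)
    exact ⟨s, by rw [← hs, image_pre hC h1], hs'⟩
  have hW : ∀ s i, φ i ∈ (W j s).image φ → i ∈ W j s := by
    intro s i h
    rw [Finset.mem_image] at h
    obtain ⟨a, ha, h⟩ := h
    rwa [← hφ h]
  refine ⟨hj, ?_, ?_, ?_, hlow, hex⟩
  · have : MD G C ⊆ Finset.univ.image (fun s => (W j s).image φ) := by
      intro D hD
      obtain ⟨s, hs, _⟩ := hst D hD
      rw [Finset.mem_image]
      exact ⟨s, Finset.mem_univ _, hs.symm⟩
    refine (Finset.card_le_card this).trans (Finset.card_image_le.trans ?_)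
    simp [ZMod.card]
  · refine (cnt_le_card (S := (Finset.range (j + 1)).image
      (fun t => (W j (-((3 * t : ℕ) : ZMod (3 * j + 2)))).image φ)) ?_).trans
        (Finset.card_image_le.trans (by simp))
    intro D hD hD2
    obtain ⟨s, hs, _⟩ := hst D hD
    have h0 := hW s 0 (hs ▸ hD2)
    unfold W at h0
    rw [Finset.mem_image] at h0
    obtain ⟨t, ht, h0⟩ := h0
    rw [Finset.mem_image]
    refine ⟨t, ht, ?_⟩
    rw [hs, eq_neg_of_add_eq_zero_left h0]
  · refine (cnt_le_card (S := {(W j 1).image φ}) ?_).trans (by simp)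
    intro D hD hD2
    obtain ⟨s, hs, hs'⟩ := hst D hD
    rw [Finset.mem_singleton]
    by_contra hne
    have h1 := hs' (-1) (fun h => hne (by rw [hs, ← h]; norm_num))
    obtain ⟨_, _, hI⟩ := hD2
    have c1 : φ 1 ∈ D := by
      by_contra h
      exact hI (φ 1) (hmC 1) h ((hadj _ _).2 (Or.inl (by ring)))
    have c2 : φ (-1) ∈ D := by
      by_contra h
      exact hI (φ (-1)) (hmC _) h ((hadj _ _).2 (Or.inr (by ring)))
    have d1 := ind_pos (mem_pre.2 c1)
    have d2 := ind_pos (mem_pre.2 c2)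
    unfold T at h1
    rw [show (-1 : ZMod (3 * j + 2)) + 2 = 1 by ring] at h1
    omega

end graph

end Cy

/-! ### The dissociation number in terms of deletion sets -/

theorem isDissoc_iff {G : SimpleGraph V} {s : Finset V} : IsDissoc G s ↔ Ds G s := by
  unfold IsDissoc nbrCount Ds
  refine forall₂_congr fun v hv => ?_
  have hf : {w ∈ (s : Set V) | G.Adj v w}.Finite := s.finite_toSet.subset (fun x hx => hx.1)
  rw [Set.ncard_le_one hf]
  constructor
  · intro h a ha b hb h1 h2
    exact h a ⟨ha, h1⟩ b ⟨hb, h2⟩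
  · intro h a ha b hb
    exact h a ha.1 b hb.1 ha.2 hb.2

theorem num_le [Fintype V] (G : SimpleGraph V) : numMaxDissoc G ≤ (MD G Finset.univ).card := by
  unfold numMaxDissoc numMaxDissocOn
  have hb : BddAbove {n | ∃ s : Finset V, (s : Set V) ⊆ Set.univ ∧ IsDissoc G s ∧ s.card = n} := by
    refine ⟨Fintype.card V, ?_⟩
    rintro n ⟨s, _, _, rfl⟩
    exact Finset.card_le_univ s
  have key : ∀ s : Finset V, IsMaxDissocOn G Set.univ s → sᶜ ∈ MD G Finset.univ := by
    rintro s ⟨_, h2, h3⟩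
    refine mem_MD.2 ⟨Finset.subset_univ _, ?_, fun E _ hE => ?_⟩
    · rw [← Finset.compl_eq_univ_sdiff, compl_compl]
      exact isDissoc_iff.1 h2
    · rw [← Finset.compl_eq_univ_sdiff] at hE
      have h4 : Eᶜ.card ≤ dissNumOn G Set.univ :=
        le_csSup hb ⟨Eᶜ, Set.subset_univ _, isDissoc_iff.2 hE, rfl⟩
      have h5 := Finset.card_add_card_compl s
      have h6 := Finset.card_add_card_compl E
      omega
  have := Nat.card_le_card_of_injective
    (fun s : {s : Finset V // IsMaxDissocOn G Set.univ s} =>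
      (⟨s.1ᶜ, key s.1 s.2⟩ : {D // D ∈ MD G Finset.univ}))
    (fun a b hab => by
      simp only [Subtype.mk.injEq, compl_inj_iff] at hab
      exact Subtype.ext hab)
  refine this.trans (le_of_eq ?_)
  rw [Nat.card_eq_fintype_card, Fintype.card_coe]

/-! ### Extracting the data from a potted graph -/

theorem exists_data [Fintype V] {G : SimpleGraph V} {j : ℕ} (hj : 1 ≤ j)
    (hG : IsPotted G (3 * j + 2)) :
    ∃ φ : ZMod (3 * j + 2) → V, Function.Injective φ ∧
      (∀ a b, G.Adj (φ a) (φ b) ↔ b = a + 1 ∨ a = b + 1) ∧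
      ∃ par d, Pot G (Finset.univ.image φ) (φ 0) par d := by
  obtain ⟨hconn, hcardE, v, c0, hc0, hlen0, u, ⟨hu, hudeg⟩, huniq⟩ := hG
  obtain ⟨c, hc, hlen, hsupp⟩ : ∃ c : G.Walk u u, c.IsCycle ∧ c.length = 3 * j + 2 ∧
      ∀ w, w ∈ c.support ↔ w ∈ c0.support :=
    ⟨c0.rotate u hu, hc0.rotate hu, by simp [hlen0], fun w => by
      simp [SimpleGraph.Walk.mem_support_rotate_iff]⟩
  have hlt : ∀ i : ZMod (3 * j + 2), i.val < 3 * j + 2 := fun i => ZMod.val_lt i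
  set φ : ZMod (3 * j + 2) → V := fun i => c.getVert i.val with hφd
  have hφ0 : φ 0 = u := by simp [hφd]
  have hinj : Function.Injective φ := by
    intro a b hab
    apply ZMod.val_injective
    have ha := hlt a
    have hb := hlt b
    exact hc.getVert_injOn' (by simp only [Set.mem_ofPred_eq]; omega)
      (by simp only [Set.mem_ofPred_eq]; omega) hab
  have hstep : ∀ i, G.Adj (φ i) (φ (i + 1)) := by
    intro i
    have h1 := c.adj_getVert_succ (i := i.val) (by rw [hlen]; exact hlt i)
    have h2 : φ (i + 1) = c.getVert (i.val + 1) := by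
      by_cases h : i.val + 1 = 3 * j + 2
      · have h3 : i + 1 = 0 := by
          have : ((i.val + 1 : ℕ) : ZMod (3 * j + 2)) = 0 := by
            rw [h]; exact ZMod.natCast_self _
          rwa [Nat.cast_add, ZMod.natCast_zmod_val, Nat.cast_one] at this
        rw [h3, hφ0, h, ← hlen, SimpleGraph.Walk.getVert_length]
      · have h3 : (i + 1).val = i.val + 1 := by
          have := hlt i
          have h4 : (1 : ZMod (3 * j + 2)).val = 1 := by
            have : Fact (1 < 3 * j + 2) := ⟨by omega⟩
            exact ZMod.val_one _
          rw [ZMod.val_add_of_lt (by omega), h4]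
        simp only [hφd, h3]
    rw [h2]
    exact h1
  have two : (2 : ZMod (3 * j + 2)) ≠ 0 := by
    simpa using Cy.cast_ne0 (j := j) (a := 2) (by omega) (by omega)
  have hpar : ∀ w, w ∉ Finset.univ.image φ → ∃ p, G.Adj w p ∧ G.dist p u < G.dist w u := by
    intro w hw
    obtain ⟨p, hp⟩ := hconn.exists_walk_length_eq_dist w u
    cases p with
    | nil => exact absurd (Finset.mem_image.2 ⟨0, Finset.mem_univ _, hφ0⟩) hw
    | cons h q =>
      refine ⟨_, h, ?_⟩
      have := SimpleGraph.dist_le q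
      rw [SimpleGraph.Walk.length_cons] at hp
      omega
  set C := Finset.univ.image φ with hC
  have hmC : ∀ i, φ i ∈ C := fun i => Finset.mem_image_of_mem _ (Finset.mem_univ _)
  let par : V → V := fun w => if h : w ∉ C then (hpar w h).choose else w
  have hpadj : ∀ w, w ∉ C → G.Adj w (par w) := by
    intro w hw
    simp only [par, dif_pos hw]
    exact (hpar w hw).choose_spec.1
  have hpd : ∀ w, w ∉ C → G.dist (par w) u < G.dist w u := by
    intro w hw
    simp only [par, dif_pos hw]
    exact (hpar w hw).choose_spec.2
  -- the two families of edges
  let F1 : Finset (Sym2 V) := Finset.univ.image (fun i => s(φ i, φ (i + 1)))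
  let F2 : Finset (Sym2 V) := Cᶜ.image (fun w => s(w, par w))
  have hF1 : F1.card = 3 * j + 2 := by
    rw [Finset.card_image_of_injective, Finset.card_univ, ZMod.card]
    intro a b hab
    rw [Sym2.eq_iff] at hab
    rcases hab with h | h
    · exact hinj h.1
    · exfalso
      have h1 := hinj h.1
      have h2 := hinj h.2
      apply two
      linear_combination h2 - h1
  have hF2 : F2.card = Fintype.card V - (3 * j + 2) := by
    rw [Finset.card_image_of_injOn, Finset.card_compl, Finset.card_image_of_injective _ hinj,
      Finset.card_univ, ZMod.card]
    intro a ha b hb hab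
    simp only [Finset.coe_compl, Set.mem_compl_iff, Finset.mem_coe] at ha hb
    rw [Sym2.eq_iff] at hab
    rcases hab with h | h
    · exact h.1
    · exfalso
      have h1 := hpd a ha
      have h2 := hpd b hb
      rw [h.2] at h1
      rw [← h.1] at h2
      omega
  have hdisj : Disjoint F1 F2 := by
    rw [Finset.disjoint_left]
    intro e h1 h2
    simp only [F1, F2, Finset.mem_image] at h1 h2
    obtain ⟨i, _, rfl⟩ := h1
    obtain ⟨w, hw, h2⟩ := h2
    rw [Finset.mem_compl] at hw
    rw [Sym2.eq_iff] at h2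
    rcases h2 with h | h
    · exact hw (h.1 ▸ hmC i)
    · exact hw (h.1 ▸ hmC (i + 1))
  have hsubE : ((F1 ∪ F2 : Finset (Sym2 V)) : Set (Sym2 V)) ⊆ G.edgeSet := by
    intro e he
    rw [Finset.mem_coe, Finset.mem_union] at he
    rcases he with h | h
    · simp only [F1, Finset.mem_image] at h
      obtain ⟨i, _, rfl⟩ := h
      exact hstep i
    · simp only [F2, Finset.mem_image] at h
      obtain ⟨w, hw, rfl⟩ := h
      exact hpadj w (Finset.mem_compl.1 hw)
  have hkn : 3 * j + 2 ≤ Fintype.card V := by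
    have := Fintype.card_le_of_injective φ hinj
    rwa [ZMod.card] at this
  have hEq : ((F1 ∪ F2 : Finset (Sym2 V)) : Set (Sym2 V)) = G.edgeSet := by
    apply Set.eq_of_subset_of_ncard_le hsubE
    rw [hcardE, Set.ncard_coe_finset, Finset.card_union_of_disjoint hdisj, hF1, hF2,
      Nat.card_eq_fintype_card]
    omega
  have hedge : ∀ a b, G.Adj a b → (∃ i, (a = φ i ∧ b = φ (i + 1)) ∨ (a = φ (i + 1) ∧ b = φ i)) ∨
      (a ∉ C ∧ b = par a) ∨ (b ∉ C ∧ a = par b) := by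
    intro a b hab
    have : s(a, b) ∈ G.edgeSet := hab
    rw [← hEq, Finset.mem_coe, Finset.mem_union] at this
    rcases this with h | h
    · left
      simp only [F1, Finset.mem_image] at h
      obtain ⟨i, _, h⟩ := h
      rw [Sym2.eq_iff] at h
      refine ⟨i, ?_⟩
      rcases h with h | h
      · exact Or.inl ⟨h.1.symm, h.2.symm⟩
      · exact Or.inr ⟨h.2.symm, h.1.symm⟩
    · right
      simp only [F2, Finset.mem_image, Finset.mem_compl] at h
      obtain ⟨w, hw, h⟩ := h
      rw [Sym2.eq_iff] at h
      rcases h with h | h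
      · left; rw [← h.1, ← h.2]; exact ⟨hw, rfl⟩
      · right; rw [← h.1, ← h.2]; exact ⟨hw, rfl⟩
  refine ⟨φ, hinj, ?_, par, fun w => G.dist w u, ?_⟩
  · intro a b
    constructor
    · intro h
      rcases hedge _ _ h with ⟨i, h | h⟩ | h | h
      · left; rw [hinj h.1, hinj h.2]
      · right; rw [hinj h.1, hinj h.2]
      · exact absurd (hmC a) h.1
      · exact absurd (hmC b) h.1
    · rintro (rfl | rfl)
      · exact hstep a
      · exact (hstep b).symm
  · refine ⟨hmC 0, hpadj, hpd, ?_, ?_⟩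
    · intro a b hab
      rcases hedge a b hab with ⟨i, h | h⟩ | h
      · left; rw [h.1, h.2]; exact ⟨hmC _, hmC _⟩
      · left; rw [h.1, h.2]; exact ⟨hmC _, hmC _⟩
      · exact Or.inr h
    · intro w hw hpw
      rw [hφ0]
      obtain ⟨i, _, hi⟩ := Finset.mem_image.1 hpw
      apply huniq
      refine ⟨?_, ?_⟩
      · rw [← hsupp, ← hi]
        exact c.getVert_mem_support _
      · have h1 : φ (i - 1) ≠ φ (i + 1) := fun h => two (by
          have := hinj h
          linear_combination -this)
        have h2 : φ (i - 1) ≠ w := fun h => hw (h ▸ hmC _)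
        have h3 : φ (i + 1) ≠ w := fun h => hw (h ▸ hmC _)
        have h4 := hstep (i - 1)
        rw [sub_add_cancel] at h4
        have h5 : (({φ (i - 1), φ (i + 1), w} : Finset V) : Set V) ⊆ G.neighborSet (par w) := by
          intro z hz
          simp only [Finset.coe_insert, Finset.coe_singleton, Set.mem_insert_iff,
            Set.mem_singleton_iff] at hz
          rw [SimpleGraph.mem_neighborSet]
          rcases hz with rfl | rfl | rfl
          · rw [← hi]; exact h4.symm
          · rw [← hi]; exact hstep i
          · exact (hpadj _ hw).symm
        have h6 := Set.ncard_le_ncard h5 (Set.toFinite _)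
        rw [Set.ncard_coe_finset, Finset.card_eq_three.2 ⟨_, _, _, h1, h2, h3, rfl⟩] at h6
        omega

theorem potted_bound_k_mod3_eq_2 {V : Type*} [Fintype V] (G : SimpleGraph V) (n k : ℕ)
    (hn : Fintype.card V = n) (hk0 : 0 < k) (hk3 : 3 ≤ k) (hkmod : k % 3 = 2)
    (hnk : k + 3 ≤ n) (hG : IsPotted G k) :
    (n % 3 = 0 → (numMaxDissoc G : ℚ) ≤
        max ((k : ℚ) * 3 ^ ((n - k - 1) / 3 - 1) + ((k : ℚ) + 1) / 3)
            (((k : ℚ) + 1) * 3 ^ ((n - k - 1) / 3 - 1) + 1)) ∧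
    (n % 3 = 1 → (numMaxDissoc G : ℚ) ≤ ((k : ℚ) + 1) * 3 ^ ((n - k - 2) / 3 - 1)) ∧
    (n % 3 = 2 → (numMaxDissoc G : ℚ) ≤
        max ((k : ℚ) * 3 ^ ((n - k) / 3 - 1)
              + ((k : ℚ) + 1) / 3 * (((n : ℚ) - k) / 3 + 1) + 1)
            (((k : ℚ) + 1) * 3 ^ ((n - k) / 3 - 1) + ((n : ℚ) + k - 1) / 3)) := by
  obtain ⟨j, rfl⟩ : ∃ j, k = 3 * j + 2 := ⟨k / 3, by omega⟩
  have hj : 1 ≤ j := by omega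
  obtain ⟨φ, hφ, hadj, par, d, hp⟩ := exists_data hj hG
  have hc := Cy.cyc hj hφ rfl hadj
  have hcard : (Finset.univ.image φ).card = 3 * j + 2 := by
    rw [Finset.card_image_of_injective _ hφ, Finset.card_univ, ZMod.card]
  obtain ⟨h1, h2, h3⟩ := hp.main hc (N := n - (3 * j + 2)) (by rw [hcard]; omega)
  have hle := num_le G
  refine ⟨fun hm => ?_, fun hm => ?_, fun hm => ?_⟩
  · obtain ⟨q, rfl⟩ : ∃ q, n = 3 * j + 2 + (3 * (q + 1) + 1) :=
      ⟨(n - (3 * j + 2)) / 3 - 1, by omega⟩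
    have h := hle.trans (h2 q (by omega))
    rw [show (3 * j + 2 + (3 * (q + 1) + 1) - (3 * j + 2) - 1) / 3 - 1 = q by omega]
    have h' : (numMaxDissoc G : ℚ) ≤ ((max ((3 * j + 2) * 3 ^ q + (j + 1))
      ((j + 1) * 3 ^ (q + 1) + 1) : ℕ) : ℚ) := by exact_mod_cast h
    refine h'.trans (le_of_eq ?_)
    push_cast
    congr 1 <;> ring
  · obtain ⟨q, rfl⟩ : ∃ q, n = 3 * j + 2 + (3 * (q + 1) + 2) :=
      ⟨(n - (3 * j + 2)) / 3 - 1, by omega⟩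
    have h := hle.trans (h3 q (by omega))
    rw [show (3 * j + 2 + (3 * (q + 1) + 2) - (3 * j + 2) - 2) / 3 - 1 = q by omega]
    have h' : (numMaxDissoc G : ℚ) ≤ (((j + 1) * 3 ^ (q + 1) : ℕ) : ℚ) := by exact_mod_cast h
    refine h'.trans (le_of_eq ?_)
    push_cast
    ring
  · obtain ⟨q, rfl⟩ : ∃ q, n = 3 * j + 2 + 3 * (q + 1) :=
      ⟨(n - (3 * j + 2)) / 3 - 1, by omega⟩
    have h := hle.trans (h1 q (by omega))
    rw [show (3 * j + 2 + 3 * (q + 1) - (3 * j + 2)) / 3 - 1 = q by omega]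
    have h' : (numMaxDissoc G : ℚ) ≤ ((max (bA j q) (bB j q) : ℕ) : ℚ) := by exact_mod_cast h
    refine h'.trans (le_of_eq ?_)
    unfold bA bB
    push_cast
    congr 1 <;> ring
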